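/- For n = 63015 = 391 + 62624, the least index i with |a(63015,i)| = M_63015 is L(63015) = 63015·63016/4 - 124 - 19787. -/

import Mathlib

open Polynomial

/-- `a n i` is the coefficient of `q^i` in `(q;q)_n = ∏_{k=1}^n (1 - q^k)` over `ℤ`. -/
noncomputable def a (n i : ℕ) : ℤ :=
  (∏ k ∈ Finset.Icc 1 n, (1 - (X : Polynomial ℤ) ^ k)).coeff i

/-- `M n` is the maximum of `|a n i|` over `0 ≤ i ≤ n(n+1)/2`. -/
noncomputable def M (n : ℕ) : ℕ :=
  (Finset.range (n * (n + 1) / 2 + 1)).sup fun i => (a n i).natAbs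

/-- `L n` is the least index `i` with `|a n i| = M n`. -/
noncomputable def L (n : ℕ) : ℕ :=
  sInf {i : ℕ | (a n i).natAbs = M n}

/-!
Put `S(θ) = ∏ 2 sin (kθ / 2)` over `1 ≤ k ≤ n`, where `n = 63015`. As `n ≡ 3 mod 4`, the
coefficient `a n i` is `-π⁻¹ ∫ S(θ) sin (d θ)` over `[0, π]`, with `d = n (n + 1) / 4 - i`.

For `θ ≥ 2 π / n`, approximate `θ / (2 π)` by a fraction with denominator `q` (Dirichlet) and
average a regularised `log |1 - r e(x)|` over blocks of `q` consecutive `k`: this gives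
`|S(θ)| ≤ e ^ 11468`, which is negligible.

On the remaining arc, `E(y) = S(2 π y / n)` satisfies `y E' = n (1 - σ) E`, where `σ(y)` is the
average of `1 - π v cot (π v)` over `v = k y / n`. Hence `E` has a peak of width `n ^ (-1 / 2)` near
`y = 72 / 91`, and its height is about `e ^ 11638`. Integrating derivatives `(y k E)'` for suitable
test functions `k` determines the sign of the increments `J(d + 1) - J(d)` of
`J(d) = ∫ E(y) sin (2 π d y / n)`: positive for `d < 19911` and negative for `19911 ≤ d < 43103`.
For larger `d` the sine oscillates across the peak, so `|J(d)|` is smaller. Thus `|a n i|` is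
maximal exactly when `|n (n + 1) / 4 - i| = 19911 = 124 + 19787`.
-/

namespace QPochhammer

open Real Finset MeasureTheory

/-! ### Coefficients as sine integrals -/

section Fourier

lemma integral_cexp_int_mul_I (m : ℤ) :
    ∫ θ in -π..π, Complex.exp ((m * θ : ℝ) * Complex.I) = if m = 0 then 2 * (π : ℂ) else 0 := by
  split_ifs with hm
  · subst hm
    simp
    ring
  · have hc : (m : ℂ) * Complex.I ≠ 0 := by simp [hm]
    have hlin (θ : ℝ) :
        Complex.exp ((m * θ : ℝ) * Complex.I) = Complex.exp (m * Complex.I * θ) := by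
      congr 1
      push_cast
      ring
    have hperiod : Complex.exp (m * Complex.I * π) = Complex.exp (m * Complex.I * (-π : ℝ)) :=
      Complex.exp_eq_exp_iff_exists_int.2 ⟨m, by push_cast; ring⟩
    simp_rw [hlin]
    rw [integral_exp_mul_complex hc, hperiod, sub_self, zero_div]

lemma integral_eval_cexp_mul_cexp_neg (P : ℂ[X]) (i : ℕ) :
    ∫ θ in -π..π, P.eval (Complex.exp (θ * Complex.I)) * Complex.exp ((-i * θ : ℝ) * Complex.I) =
      2 * π * P.coeff i := by
  induction P using Polynomial.induction_on' with
  | add P Q hP hQ =>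
    simp only [eval_add, add_mul, coeff_add, mul_add]
    rw [intervalIntegral.integral_add, hP, hQ] <;>
      exact Continuous.intervalIntegrable (by fun_prop) _ _
  | monomial k c =>
    have hterm (θ : ℝ) : (monomial k c).eval (Complex.exp (θ * Complex.I)) *
        Complex.exp ((-i * θ : ℝ) * Complex.I) =
          c * Complex.exp ((((k - i : ℤ) : ℝ) * θ : ℝ) * Complex.I) := by
      rw [eval_monomial, mul_assoc, ← Complex.exp_nat_mul, ← Complex.exp_add]
      congr 2
      push_cast
      ring
    simp_rw [hterm]
    rw [intervalIntegral.integral_const_mul, integral_cexp_int_mul_I, coeff_monomial]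
    by_cases hki : k = i
    · rw [if_pos (by omega), if_pos hki]
      ring
    · rw [if_neg (by omega), if_neg hki]
      ring

/-- The real trigonometric product `∏_{k=1}^n 2 sin (kθ/2)`, which is `(q;q)_n` at `q = e^{iθ}` up
to a unimodular factor. -/
noncomputable def sineProd (n : ℕ) (θ : ℝ) : ℝ := ∏ k ∈ Icc 1 n, (2 * sin (k * θ / 2))

lemma continuous_sineProd (n : ℕ) : Continuous (sineProd n) := by
  unfold sineProd
  fun_prop

lemma sineProd_neg_of_odd {n : ℕ} (hn : Odd n) (θ : ℝ) : sineProd n (-θ) = -sineProd n θ := by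
  have hfactor (k : ℕ) : 2 * sin (k * -θ / 2) = -1 * (2 * sin (k * θ / 2)) := by
    rw [mul_neg, neg_div, sin_neg]
    ring
  unfold sineProd
  simp_rw [hfactor]
  rw [prod_mul_distrib, prod_const, Nat.card_Icc, Nat.add_sub_cancel, hn.neg_one_pow, neg_one_mul]

lemma one_sub_cexp_mul_I (x : ℝ) :
    1 - Complex.exp (x * Complex.I) =
      -Complex.I * (2 * sin (x / 2) : ℝ) * Complex.exp ((x / 2 : ℝ) * Complex.I) := by
  have hsq : Complex.exp (x * Complex.I) = Complex.exp ((x / 2 : ℝ) * Complex.I) ^ 2 := by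
    rw [← Complex.exp_nat_mul]
    congr 1
    push_cast
    ring
  have hpyth : Complex.cos (x / 2 : ℝ) ^ 2 + Complex.sin (x / 2 : ℝ) ^ 2 = 1 :=
    Complex.cos_sq_add_sin_sq _
  rw [hsq, Complex.exp_mul_I, Complex.ofReal_mul, Complex.ofReal_sin, Complex.ofReal_ofNat]
  linear_combination -hpyth + Complex.sin (x / 2 : ℝ) ^ 2 * Complex.I_sq

lemma prod_one_sub_cexp_pow (n : ℕ) (θ : ℝ) :
    ∏ k ∈ Icc 1 n, (1 - Complex.exp (θ * Complex.I) ^ k) =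
      (-Complex.I) ^ n * sineProd n θ * Complex.exp ((n * (n + 1) / 4 * θ : ℝ) * Complex.I) := by
  induction n with
  | zero => simp [sineProd]
  | succ m ih =>
    have hpow : Complex.exp (θ * Complex.I) ^ (m + 1) =
        Complex.exp (((m + 1 : ℕ) * θ : ℝ) * Complex.I) := by
      rw [← Complex.exp_nat_mul]
      congr 1
      push_cast
      ring
    have hphase : Complex.exp (((m + 1 : ℕ) * ((m + 1 : ℕ) + 1) / 4 * θ : ℝ) * Complex.I) =
        Complex.exp ((m * (m + 1) / 4 * θ : ℝ) * Complex.I) *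
          Complex.exp (((m + 1 : ℕ) * θ / 2 : ℝ) * Complex.I) := by
      rw [← Complex.exp_add]
      congr 1
      push_cast
      ring
    rw [prod_Icc_succ_top (by omega), ih, hpow, one_sub_cexp_mul_I, hphase, sineProd, sineProd,
      prod_Icc_succ_top (by omega)]
    push_cast
    ring

lemma two_pi_mul_a (n i : ℕ) :
    2 * π * (a n i : ℂ) = (-Complex.I) ^ n * ∫ θ in -π..π,
      (sineProd n θ : ℂ) * Complex.exp (((n * (n + 1) / 4 - i) * θ : ℝ) * Complex.I) := by
  have hcoeff : (a n i : ℂ) = (∏ k ∈ Icc 1 n, (1 - (X : ℂ[X]) ^ k)).coeff i := by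
    have h := coeff_map (p := ∏ k ∈ Icc 1 n, (1 - (X : ℤ[X]) ^ k)) (Int.castRingHom ℂ) i
    simpa [Polynomial.map_prod, a] using h.symm
  rw [hcoeff, ← integral_eval_cexp_mul_cexp_neg, ← intervalIntegral.integral_const_mul]
  refine intervalIntegral.integral_congr fun θ _ => ?_
  simp only [eval_prod, eval_sub, eval_one, eval_pow, eval_X]
  rw [prod_one_sub_cexp_pow, mul_assoc, mul_assoc, ← Complex.exp_add]
  congr 3
  push_cast
  ring

lemma integral_neg_self_of_even {f : ℝ → ℝ} (hf : Continuous f) (heven : Function.Even f) (b : ℝ) :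
    ∫ x in -b..b, f x = 2 * ∫ x in 0..b, f x := by
  have hreflect := intervalIntegral.integral_comp_neg (a := 0) (b := b) f
  simp_rw [heven _] at hreflect
  rw [← intervalIntegral.integral_add_adjacent_intervals (hf.intervalIntegrable (-b) 0)
    (hf.intervalIntegrable 0 b), two_mul]
  simpa using hreflect.symm

theorem pi_mul_a_of_mod_four_eq_three {n : ℕ} (hn : n % 4 = 3) (i : ℕ) :
    π * (a n i : ℝ) = -∫ θ in 0..π, sineProd n θ * sin ((n * (n + 1) / 4 - i) * θ) := by
  set c : ℝ := n * (n + 1) / 4 - i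
  have hodd : Odd n := Nat.odd_iff.2 (by omega)
  have hcont := continuous_sineProd n
  have hI : (-Complex.I) ^ n = Complex.I := by
    obtain ⟨m, rfl⟩ : ∃ m, n = 4 * m + 3 := ⟨n / 4, by omega⟩
    rw [pow_add, pow_mul, neg_pow Complex.I 4, neg_pow Complex.I 3, Complex.I_pow_four,
      Complex.I_pow_three]
    norm_num
  have hintegrable : IntervalIntegrable
      (fun θ : ℝ => (sineProd n θ : ℂ) * Complex.exp ((c * θ : ℝ) * Complex.I)) volume (-π) π :=
    Continuous.intervalIntegrable (by fun_prop) _ _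
  have him := Complex.imCLM.intervalIntegral_comp_comm hintegrable
  simp only [Complex.imCLM_apply, Complex.im_ofReal_mul, Complex.exp_ofReal_mul_I_im] at him
  have heven : Function.Even fun θ => sineProd n θ * sin (c * θ) := fun θ => by
    simp only [sineProd_neg_of_odd hodd, mul_neg, sin_neg, neg_mul, neg_neg]
  have hre := congrArg Complex.re (two_pi_mul_a n i)
  rw [hI, Complex.I_mul_re, ← him, integral_neg_self_of_even (by fun_prop) heven] at hre
  have hlhs : (2 * π * (a n i : ℂ)).re = 2 * π * (a n i : ℝ) := by
    norm_cast
  linarith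

end Fourier

/-! ### The logarithmic distance `log |1 - r e(x)|` -/

section LogDist

/-- The regularised logarithmic distance `log |1 - r e^{2πix}|`. For `r < 1` it is bounded and
smooth in `x`, and a factor `log |2 sin πx|` of the sine product exceeds it by at most
`log (2 / (1 + r))`. -/
noncomputable def logDist (r x : ℝ) : ℝ :=
  log ‖(1 : ℂ) - r * Complex.exp ((2 * π * x : ℝ) * Complex.I)‖

lemma norm_one_sub_mul_cexp_sq (r x : ℝ) :
    ‖(1 : ℂ) - r * Complex.exp ((2 * π * x : ℝ) * Complex.I)‖ ^ 2 =
      1 - 2 * r * cos (2 * π * x) + r ^ 2 := by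
  rw [← Complex.normSq_eq_norm_sq, Complex.normSq_apply]
  simp only [Complex.sub_re, Complex.sub_im, Complex.one_re, Complex.one_im, Complex.re_ofReal_mul,
    Complex.im_ofReal_mul, Complex.exp_ofReal_mul_I_re, Complex.exp_ofReal_mul_I_im]
  linear_combination r ^ 2 * cos_sq_add_sin_sq (2 * π * x)

lemma logDist_eq_half_log (r x : ℝ) :
    logDist r x = 1 / 2 * log (1 - 2 * r * cos (2 * π * x) + r ^ 2) := by
  rw [← norm_one_sub_mul_cexp_sq, log_pow, logDist]
  push_cast
  ring

lemma logDist_neg (r x : ℝ) : logDist r (-x) = logDist r x := by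
  rw [logDist_eq_half_log, logDist_eq_half_log, mul_neg, cos_neg]

lemma logDist_periodic (r : ℝ) : Function.Periodic (logDist r) 1 := fun x => by
  rw [logDist_eq_half_log, logDist_eq_half_log, mul_add, mul_one, cos_add_two_pi]

lemma abs_sin_mul_one_sub_sq_le (r t : ℝ) :
    |sin t| * (1 - r ^ 2) ≤ 1 - 2 * r * cos t + r ^ 2 := by
  have hpyth := cos_sq_add_sin_sq t
  rw [← sq_abs (sin t)] at hpyth
  have hsq : (|sin t| * (1 - r ^ 2) + cos t * (2 * r)) ^ 2 ≤ (1 + r ^ 2) ^ 2 := by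
    have hlagrange : (1 + r ^ 2) ^ 2 - (|sin t| * (1 - r ^ 2) + cos t * (2 * r)) ^ 2 =
        (|sin t| * (2 * r) - cos t * (1 - r ^ 2)) ^ 2 := by
      linear_combination (-(1 + r ^ 2) ^ 2) * hpyth
    linarith [sq_nonneg (|sin t| * (2 * r) - cos t * (1 - r ^ 2))]
  linarith [le_of_sq_le_sq hsq (by positivity)]

variable {r : ℝ} (hr0 : 0 ≤ r) (hr1 : r < 1)
include hr0 hr1

lemma one_sub_two_mul_cos_add_sq_pos (t : ℝ) : 0 < 1 - 2 * r * cos t + r ^ 2 := by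
  nlinarith [mul_le_mul_of_nonneg_left (cos_le_one t) hr0, mul_pos (sub_pos.2 hr1) (sub_pos.2 hr1)]

lemma exp_logDist (x : ℝ) :
    exp (logDist r x) = ‖(1 : ℂ) - r * Complex.exp ((2 * π * x : ℝ) * Complex.I)‖ := by
  have hsq := (one_sub_two_mul_cos_add_sq_pos hr0 hr1 (2 * π * x)).ne'
  rw [← norm_one_sub_mul_cexp_sq] at hsq
  exact exp_log ((norm_nonneg _).lt_of_ne' (pow_ne_zero_iff two_ne_zero |>.1 hsq))

lemma continuous_logDist : Continuous (logDist r) := by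
  simp_rw [funext (logDist_eq_half_log r)]
  exact continuous_const.mul
    (Continuous.log (by fun_prop) fun x => (one_sub_two_mul_cos_add_sq_pos hr0 hr1 _).ne')

lemma intervalIntegrable_logDist (u v : ℝ) : IntervalIntegrable (logDist r) volume u v :=
  (continuous_logDist hr0 hr1).intervalIntegrable u v

lemma logDist_le_log_two (x : ℝ) : logDist r x ≤ log 2 := by
  have hle : 1 - 2 * r * cos (2 * π * x) + r ^ 2 ≤ 2 ^ 2 := by
    nlinarith [neg_one_le_cos (2 * π * x)]
  have hlog := log_le_log (one_sub_two_mul_cos_add_sq_pos hr0 hr1 _) hle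
  rw [log_pow] at hlog
  rw [logDist_eq_half_log]
  push_cast at hlog
  linarith

lemma monotoneOn_logDist : MonotoneOn (logDist r) (Set.Icc 0 (1 / 2)) := by
  intro x hx y hy hxy
  have hcos : cos (2 * π * y) ≤ cos (2 * π * x) :=
    cos_le_cos_of_nonneg_of_le_pi (mul_nonneg two_pi_pos.le hx.1)
      (by nlinarith [pi_pos, hy.2]) (by gcongr)
  have hlog := log_le_log (one_sub_two_mul_cos_add_sq_pos hr0 hr1 (2 * π * x))
    (show 1 - 2 * r * cos (2 * π * x) + r ^ 2 ≤ 1 - 2 * r * cos (2 * π * y) + r ^ 2 by nlinarith)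
  rw [logDist_eq_half_log, logDist_eq_half_log]
  linarith

lemma hasDerivAt_logDist (x : ℝ) :
    HasDerivAt (logDist r)
      (2 * π * r * sin (2 * π * x) / (1 - 2 * r * cos (2 * π * x) + r ^ 2)) x := by
  rw [funext (logDist_eq_half_log r)]
  have hlin : HasDerivAt (fun t : ℝ => 2 * π * t) (2 * π) x := by
    simpa using (hasDerivAt_id x).const_mul (2 * π)
  have hlog := (((hlin.cos.const_mul (2 * r)).const_sub 1).add_const (r ^ 2)).log
    (one_sub_two_mul_cos_add_sq_pos hr0 hr1 (2 * π * x)).ne'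
  refine (hlog.const_mul (1 / 2)).congr_deriv ?_
  ring

lemma logDist_le_add_mul_abs_sub (x y : ℝ) :
    logDist r y ≤ logDist r x + 2 * π * r / (1 - r ^ 2) * |y - x| := by
  have hr2 : 0 < 1 - r ^ 2 := by nlinarith
  have hbound (t : ℝ) : ‖2 * π * r * sin (2 * π * t) / (1 - 2 * r * cos (2 * π * t) + r ^ 2)‖ ≤
      2 * π * r / (1 - r ^ 2) := by
    have hpos := one_sub_two_mul_cos_add_sq_pos hr0 hr1 (2 * π * t)
    have hc : 0 ≤ 2 * π * r := mul_nonneg two_pi_pos.le hr0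
    rw [norm_eq_abs, abs_div, abs_mul, abs_of_nonneg hc, abs_of_pos hpos,
      div_le_div_iff₀ hpos hr2, mul_assoc]
    exact mul_le_mul_of_nonneg_left (abs_sin_mul_one_sub_sq_le r _) hc
  have hmvt := convex_univ.norm_image_sub_le_of_norm_hasDerivWithin_le
    (fun t _ => (hasDerivAt_logDist hr0 hr1 t).hasDerivWithinAt) (fun t _ => hbound t)
    (Set.mem_univ x) (Set.mem_univ y)
  rw [norm_eq_abs, norm_eq_abs] at hmvt
  linarith [le_abs_self (logDist r y - logDist r x)]

lemma integral_logDist : ∫ x in (0 : ℝ)..1, logDist r x = 0 := by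
  have hJensen := circleAverage_log_norm_sub_const₀ (a := (r : ℂ))
    (by simpa [abs_of_nonneg hr0] using hr1)
  rw [circleAverage_def] at hJensen
  have hcircle (x : ℝ) :
      logDist r x = (fun θ : ℝ => log ‖circleMap 0 1 θ - r‖) (2 * π * x) := by
    have hsq : ‖circleMap 0 1 (2 * π * x) - (r : ℂ)‖ ^ 2 =
        1 - 2 * r * cos (2 * π * x) + r ^ 2 := by
      rw [← Complex.normSq_eq_norm_sq, Complex.normSq_apply, circleMap, zero_add,
        Complex.ofReal_one, one_mul]
      simp only [Complex.sub_re, Complex.sub_im, Complex.exp_ofReal_mul_I_re,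
        Complex.exp_ofReal_mul_I_im, Complex.ofReal_re, Complex.ofReal_im]
      linear_combination cos_sq_add_sin_sq (2 * π * x)
    rw [logDist_eq_half_log, ← hsq, log_pow]
    push_cast
    ring
  simp_rw [hcircle]
  rw [intervalIntegral.integral_comp_mul_left (fun θ : ℝ => log ‖circleMap 0 1 θ - r‖)
    two_pi_pos.ne']
  simpa using hJensen

-- Evaluate `X ^ q - α ^ q = ∏ (X - ζ ^ j α)` at `1`, with `ζ = e(p/q)` and `α = r e(x + m p/q)`.
lemma sum_logDist_add_mul_div {p : ℤ} {q : ℕ} (hq : 0 < q) (hpq : IsCoprime p (q : ℤ)) (x : ℝ)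
    (m : ℕ) :
    ∑ j ∈ range q, logDist r (x + (m + j : ℕ) * (p / q)) = logDist (r ^ q) (q * x) := by
  have hζ := Complex.isPrimitiveRoot_exp_of_isCoprime p q hq.ne' hpq
  set ζ := Complex.exp (2 * π * Complex.I * (p / q)) with hζ_def
  set α := (r : ℂ) * Complex.exp ((2 * π * (x + m * (p / q)) : ℝ) * Complex.I) with hα
  have hfactor : 1 - α ^ q = ∏ j ∈ range q, (1 - ζ ^ j * α) := by
    simpa [eval_prod] using congrArg (eval 1) (X_pow_sub_C_eq_prod hζ hq (rfl : α ^ q = α ^ q))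
  have hterm (j : ℕ) : exp (logDist r (x + (m + j : ℕ) * (p / q))) = ‖1 - ζ ^ j * α‖ := by
    rw [exp_logDist hr0 hr1, hα, hζ_def, ← Complex.exp_nat_mul, mul_left_comm, ← Complex.exp_add]
    congr 4
    push_cast
    ring
  have hq' : (q : ℂ) ≠ 0 := Nat.cast_ne_zero.2 hq.ne'
  have hpow : α ^ q = (r ^ q : ℝ) * Complex.exp ((2 * π * (q * x) : ℝ) * Complex.I) := by
    rw [hα, mul_pow, ← Complex.exp_nat_mul, Complex.ofReal_pow]
    congr 1
    refine Complex.exp_eq_exp_iff_exists_int.2 ⟨m * p, ?_⟩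
    push_cast
    field_simp
  apply exp_injective
  rw [exp_sum, prod_congr rfl fun j _ => hterm j, ← norm_prod, ← hfactor,
    exp_logDist (pow_nonneg hr0 q) (pow_lt_one₀ hr0 hr1 hq.ne'), hpow]

end LogDist

lemma intervalIntegral_nonpos {f : ℝ → ℝ} {a b : ℝ} (hab : a ≤ b)
    (hf : ∀ x ∈ Set.Icc a b, f x ≤ 0) :
    ∫ x in a..b, f x ≤ 0 := by
  have hneg := intervalIntegral.integral_nonneg (f := -f) (μ := volume) hab
    fun x hx => neg_nonneg.2 (hf x hx)
  simpa only [Pi.neg_apply, intervalIntegral.integral_neg, neg_nonneg] using hneg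

section LogDistPrimitive

/-- The primitive `∫₀ʷ log |1 - r e(x)| dx` of `logDist r`, a regularised (and rescaled) Clausen
function. -/
noncomputable def logDistPrimitive (r w : ℝ) : ℝ := ∫ x in 0..w, logDist r x

lemma log_four_mul_le_logDist (r : ℝ) {x : ℝ} (hx0 : 0 < x) (hx : x ≤ 1 / 4) :
    log (4 * x) ≤ logDist r x := by
  have hjordan : 4 * x ≤ sin (2 * π * x) := by
    have h := mul_le_sin (x := 2 * π * x) (by positivity) (by nlinarith [pi_pos])
    calc 4 * x = 2 / π * (2 * π * x) := by field_simp; ring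
      _ ≤ sin (2 * π * x) := h
  have hsq : (4 * x) ^ 2 ≤ 1 - 2 * r * cos (2 * π * x) + r ^ 2 := by
    nlinarith [pow_le_pow_left₀ (by positivity) hjordan 2, cos_sq_add_sin_sq (2 * π * x),
      sq_nonneg (r - cos (2 * π * x))]
  have hlog := log_le_log (by positivity) hsq
  rw [log_pow] at hlog
  rw [logDist_eq_half_log]
  push_cast at hlog
  linarith

variable {r : ℝ} (hr0 : 0 ≤ r) (hr1 : r < 1)
include hr0 hr1

lemma integral_logDist_eq_sub (u v : ℝ) :
    ∫ x in u..v, logDist r x = logDistPrimitive r v - logDistPrimitive r u :=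
  (intervalIntegral.integral_interval_sub_left (intervalIntegrable_logDist hr0 hr1 _ _)
    (intervalIntegrable_logDist hr0 hr1 _ _)).symm

lemma logDistPrimitive_periodic : Function.Periodic (logDistPrimitive r) 1 := fun w => by
  have hperiod := (logDist_periodic r).intervalIntegral_add_eq w 0
  rw [zero_add, integral_logDist hr0 hr1, integral_logDist_eq_sub hr0 hr1] at hperiod
  exact sub_eq_zero.1 hperiod

lemma logDistPrimitive_one_sub (w : ℝ) : logDistPrimitive r (1 - w) = -logDistPrimitive r w := by
  have hneg := intervalIntegral.integral_comp_neg (logDist r) (a := 0) (b := w)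
  simp_rw [logDist_neg, neg_zero] at hneg
  rw [sub_eq_neg_add, logDistPrimitive_periodic hr0 hr1, logDistPrimitive, logDistPrimitive, hneg,
    ← intervalIntegral.integral_symm]

lemma logDistPrimitive_half : logDistPrimitive r (1 / 2) = 0 := by
  have hreflect := logDistPrimitive_one_sub hr0 hr1 (1 / 2)
  norm_num at hreflect ⊢
  linarith

-- `logDist r` increases on `[0, 1/2]`, so its primitive is convex there and vanishes at both ends.
lemma logDistPrimitive_nonpos {w : ℝ} (hw0 : 0 ≤ w) (hw : w ≤ 1 / 2) :
    logDistPrimitive r w ≤ 0 := by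
  have hmono := monotoneOn_logDist hr0 hr1
  rcases le_total (logDist r w) 0 with hsign | hsign
  · exact intervalIntegral_nonpos hw0 fun x hx =>
      (hmono ⟨hx.1, hx.2.trans hw⟩ ⟨hw0, hw⟩ hx.2).trans hsign
  · have hrest : 0 ≤ ∫ x in w..(1 / 2), logDist r x :=
      intervalIntegral.integral_nonneg hw fun x hx =>
        hsign.trans (hmono ⟨hw0, hw⟩ ⟨hw0.trans hx.1, hx.2⟩ hx.1)
    rw [integral_logDist_eq_sub hr0 hr1, logDistPrimitive_half hr0 hr1] at hrest
    linarith

lemma logDistPrimitive_le_mul_log_two {w : ℝ} (hw : 1 / 2 ≤ w) :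
    logDistPrimitive r w ≤ (w - 1 / 2) * log 2 := by
  have hle : ∫ x in (1 / 2)..w, logDist r x ≤ ∫ _ in (1 / 2)..w, log 2 :=
    intervalIntegral.integral_mono_on hw (intervalIntegrable_logDist hr0 hr1 _ _) (by simp)
      fun x _ => logDist_le_log_two hr0 hr1 x
  rw [integral_logDist_eq_sub hr0 hr1, logDistPrimitive_half hr0 hr1,
    intervalIntegral.integral_const, smul_eq_mul] at hle
  linarith

lemma neg_quarter_le_logDistPrimitive {v : ℝ} (hv0 : 0 ≤ v) (hv : v ≤ 1 / 4) :
    -(1 / 4) ≤ logDistPrimitive r v := by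
  have hlog : IntervalIntegrable (fun x : ℝ => log (4 * x)) volume 0 v := by
    simpa using (intervalIntegral.intervalIntegrable_log' (a := 0) (b := 4 * v)).comp_mul_left
      (c := 4)
  have hle : ∫ x in 0..v, log (4 * x) ≤ logDistPrimitive r v :=
    intervalIntegral.integral_mono_on_of_le_Ioo hv0 hlog (intervalIntegrable_logDist hr0 hr1 _ _)
      fun x hx => log_four_mul_le_logDist r hx.1 (hx.2.le.trans hv)
  have hint : ∫ x in 0..v, log (4 * x) = v * log (4 * v) - v := by
    rw [intervalIntegral.integral_comp_mul_left log four_ne_zero, integral_log, mul_zero, log_zero,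
      smul_eq_mul]
    ring
  rw [hint] at hle
  rcases hv0.eq_or_lt with rfl | hv0'
  · simp [logDistPrimitive]
  · have hlog_ge := mul_le_mul_of_nonneg_left
      (one_sub_inv_le_log_of_pos (show 0 < 4 * v by linarith)) hv0
    have hscale : v * (1 - (4 * v)⁻¹) = v - 1 / 4 := by field_simp
    linarith

lemma logDistPrimitive_le_of_mem_Icc {w : ℝ} (hw0 : 0 ≤ w) (hw1 : w ≤ 1) :
    logDistPrimitive r w ≤ 1 / 4 ∧ logDistPrimitive r w ≤ w / 3 := by
  rcases le_total w (1 / 2) with hhalf | hhalf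
  · have hnonpos := logDistPrimitive_nonpos hr0 hr1 hw0 hhalf
    constructor <;> linarith
  · rcases le_total w (3 / 4) with hw | hw
    · have hmid := logDistPrimitive_le_mul_log_two hr0 hr1 hhalf
      constructor <;> nlinarith [log_two_lt_d9, log_two_gt_d9]
    · have hend := neg_quarter_le_logDistPrimitive hr0 hr1 (v := 1 - w) (by linarith) (by linarith)
      rw [logDistPrimitive_one_sub hr0 hr1] at hend
      constructor <;> linarith

lemma logDistPrimitive_fract (w : ℝ) :
    logDistPrimitive r (Int.fract w) = logDistPrimitive r w := by
  simpa using (logDistPrimitive_periodic hr0 hr1).sub_int_mul_eq (x := w) ⌊w⌋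

lemma logDistPrimitive_le_quarter (w : ℝ) : logDistPrimitive r w ≤ 1 / 4 := by
  rw [← logDistPrimitive_fract hr0 hr1]
  exact (logDistPrimitive_le_of_mem_Icc hr0 hr1 (Int.fract_nonneg w) (Int.fract_lt_one w).le).1

lemma logDistPrimitive_le_third {w : ℝ} (hw : 0 ≤ w) : logDistPrimitive r w ≤ w / 3 := by
  rw [← logDistPrimitive_fract hr0 hr1]
  have hfract :=
    (logDistPrimitive_le_of_mem_Icc hr0 hr1 (Int.fract_nonneg w) (Int.fract_lt_one w).le).2
  have hfloor : (0 : ℝ) ≤ ⌊w⌋ := Int.cast_nonneg (Int.floor_nonneg.2 hw)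
  linarith [Int.self_sub_floor w]

lemma logDistPrimitive_nonpos_of_one_le {w : ℝ} (hw1 : 1 ≤ w) (hw : w ≤ 3 / 2) :
    logDistPrimitive r w ≤ 0 := by
  rw [← (logDistPrimitive_periodic hr0 hr1).sub_eq]
  exact logDistPrimitive_nonpos hr0 hr1 (by linarith) (by linarith)

end LogDistPrimitive

/-! ### Sums over blocks of length `q` along a rational approximation -/

section Blocks

variable {r : ℝ} (hr0 : 0 ≤ r) (hr1 : r < 1)
include hr0 hr1

lemma lipschitzConst_nonneg : 0 ≤ 2 * π * r / (1 - r ^ 2) :=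
  div_nonneg (mul_nonneg two_pi_pos.le hr0) (by nlinarith)

variable {p : ℤ} {q : ℕ} (hq : 0 < q) (hpq : IsCoprime p (q : ℤ)) {δ : ℝ} (hδ : 0 < δ)
include hq hpq hδ

lemma sum_block_logDist_le_logDist (b : ℕ) {x : ℝ} (hx0 : b * (q * δ) ≤ x)
    (hx1 : x ≤ (b + 1) * (q * δ)) :
    ∑ j ∈ range q, logDist r ((b * q + 1 + j : ℕ) * (p / q + δ)) ≤
      logDist (r ^ q) (q * x) + q * (2 * π * r / (1 - r ^ 2)) * (q * δ) := by
  have hK := lipschitzConst_nonneg hr0 hr1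
  set K := 2 * π * r / (1 - r ^ 2)
  have hconst : q * K * (q * δ) = ∑ _j ∈ range q, K * (q * δ) := by
    rw [sum_const, card_range, nsmul_eq_mul, mul_assoc]
  rw [← sum_logDist_add_mul_div hr0 hr1 hq hpq x (b * q + 1), hconst, ← sum_add_distrib]
  refine sum_le_sum fun j hj => ?_
  refine (logDist_le_add_mul_abs_sub hr0 hr1 (x + (b * q + 1 + j : ℕ) * (p / q)) _).trans ?_
  have hjq : (j : ℝ) + 1 ≤ q := by exact_mod_cast mem_range.1 hj
  have hshift :
      |((b * q + 1 + j : ℕ) : ℝ) * (p / q + δ) - (x + (b * q + 1 + j : ℕ) * (p / q))| ≤ q * δ := by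
    rw [abs_le]
    push_cast
    constructor <;> nlinarith [j.cast_nonneg (α := ℝ)]
  gcongr

-- Average the preceding bound over `x`.
lemma sum_block_logDist_le (b : ℕ) :
    ∑ j ∈ range q, logDist r ((b * q + 1 + j : ℕ) * (p / q + δ)) ≤
      1 / (q ^ 2 * δ) * (logDistPrimitive (r ^ q) ((b + 1) * (q ^ 2 * δ)) -
        logDistPrimitive (r ^ q) (b * (q ^ 2 * δ))) +
        q * (2 * π * r / (1 - r ^ 2)) * (q * δ) := by
  have hpt := fun x hx => sum_block_logDist_le_logDist hr0 hr1 hq hpq hδ b (x := x)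
    (Set.mem_Icc.1 hx).1 (Set.mem_Icc.1 hx).2
  set T := ∑ j ∈ range q, logDist r ((b * q + 1 + j : ℕ) * (p / q + δ))
  set R := q * (2 * π * r / (1 - r ^ 2)) * (q * δ)
  have hq' : (0 : ℝ) < q := Nat.cast_pos.2 hq
  have hrq0 := pow_nonneg hr0 q
  have hrq1 := pow_lt_one₀ hr0 hr1 hq.ne'
  have hint : IntervalIntegrable (fun x => logDist (r ^ q) (q * x)) volume (b * (q * δ))
      ((b + 1) * (q * δ)) :=
    ((continuous_logDist hrq0 hrq1).comp (continuous_const_mul _)).intervalIntegrable _ _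
  have hmono := intervalIntegral.integral_mono_on (f := fun _ => T) (by gcongr; linarith)
    (by simp) (hint.add (by simp)) hpt
  rw [intervalIntegral.integral_add hint (by simp), intervalIntegral.integral_const,
    intervalIntegral.integral_const,
    intervalIntegral.integral_comp_mul_left (logDist (r ^ q)) hq'.ne',
    integral_logDist_eq_sub hrq0 hrq1,
    show (q : ℝ) * ((b + 1) * (q * δ)) = (b + 1) * (q ^ 2 * δ) by ring,
    show (q : ℝ) * (b * (q * δ)) = b * (q ^ 2 * δ) by ring,
    show ((b : ℝ) + 1) * (q * δ) - b * (q * δ) = q * δ by ring] at hmono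
  simp only [smul_eq_mul] at hmono
  have hqδ : 0 < q * δ := by positivity
  refine le_of_mul_le_mul_left (hmono.trans_eq ?_) hqδ
  field_simp

lemma sum_logDist_le_of_mul (B : ℕ) :
    ∑ k ∈ range (B * q), logDist r ((k + 1 : ℕ) * (p / q + δ)) ≤
      1 / (q ^ 2 * δ) * logDistPrimitive (r ^ q) (B * (q ^ 2 * δ)) +
        (B * q : ℕ) * (2 * π * r / (1 - r ^ 2)) * (q * δ) := by
  induction B with
  | zero => simp [logDistPrimitive]
  | succ B ih =>
    have hblock := sum_block_logDist_le hr0 hr1 hq hpq hδ B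
    rw [Nat.succ_mul, sum_range_add]
    simp_rw [add_right_comm (B * q) _ 1]
    push_cast at *
    linarith

lemma sum_logDist_le (n : ℕ) :
    ∑ k ∈ range n, logDist r ((k + 1 : ℕ) * (p / q + δ)) ≤
      1 / (q ^ 2 * δ) * logDistPrimitive (r ^ q) ((n / q : ℕ) * (q ^ 2 * δ)) +
        n * (2 * π * r / (1 - r ^ 2)) * (q * δ) + (n % q : ℕ) * log 2 := by
  have hK := lipschitzConst_nonneg hr0 hr1
  have hblocks := sum_logDist_le_of_mul hr0 hr1 hq hpq hδ (n / q)
  set K := 2 * π * r / (1 - r ^ 2)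
  have hsplit : ∑ k ∈ range n, logDist r ((k + 1 : ℕ) * (p / q + δ)) =
      ∑ k ∈ range (n / q * q), logDist r ((k + 1 : ℕ) * (p / q + δ)) +
        ∑ k ∈ range (n % q), logDist r ((n / q * q + k + 1 : ℕ) * (p / q + δ)) := by
    conv_lhs => rw [← Nat.div_add_mod' n q]
    rw [sum_range_add]
  have hrest : ∑ k ∈ range (n % q), logDist r ((n / q * q + k + 1 : ℕ) * (p / q + δ)) ≤
      (n % q : ℕ) * log 2 := by
    simpa using sum_le_card_nsmul (range (n % q)) _ _ fun k _ =>
      logDist_le_log_two hr0 hr1 ((n / q * q + k + 1 : ℕ) * (p / q + δ))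
  have hcount : ((n / q * q : ℕ) : ℝ) * K * (q * δ) ≤ n * K * (q * δ) := by
    gcongr
    exact Nat.div_mul_le_self n q
  linarith

end Blocks

section SineProduct

variable {r : ℝ} (hr0 : 0 ≤ r) (hr1 : r < 1)
include hr0 hr1

lemma abs_two_mul_sin_le_exp_logDist (x : ℝ) :
    |2 * sin (π * x)| ≤ exp (log (2 / (1 + r)) + logDist r x) := by
  rw [exp_add, exp_log (by positivity), exp_logDist hr0 hr1]
  refine abs_le_of_sq_le_sq ?_ (by positivity)
  have hcos : cos (2 * π * x) = 1 - 2 * sin (π * x) ^ 2 := by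
    rw [mul_assoc, cos_two_mul, cos_sq']
    ring
  rw [mul_pow, mul_pow _ ‖_‖, norm_one_sub_mul_cexp_sq, div_pow, hcos, div_mul_eq_mul_div,
    le_div_iff₀ (by positivity)]
  nlinarith [sq_nonneg (1 - r), sin_sq_le_one (π * x)]

lemma prod_abs_two_mul_sin_le_exp (n : ℕ) (α : ℝ) :
    ∏ k ∈ range n, |2 * sin (π * ((k + 1 : ℕ) * α))| ≤
      exp (n * log (2 / (1 + r)) + ∑ k ∈ range n, logDist r ((k + 1 : ℕ) * α)) := by
  have hsum : n * log (2 / (1 + r)) + ∑ k ∈ range n, logDist r ((k + 1 : ℕ) * α) =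
      ∑ k ∈ range n, (log (2 / (1 + r)) + logDist r ((k + 1 : ℕ) * α)) := by
    simp [sum_add_distrib]
  rw [hsum, exp_sum]
  exact prod_le_prod (fun _ _ => abs_nonneg _) fun k _ => abs_two_mul_sin_le_exp_logDist hr0 hr1 _

end SineProduct

/-! ### The minor arcs for `n = 63015` -/

/-- The index `63015` of the theorem. It is irreducible so that products and sums up to it are never
unfolded. -/
@[irreducible] def n₀ : ℕ := 63015

lemma n₀_eq : n₀ = 63015 := by
  unfold n₀
  rfl

lemma cast_n₀ : (n₀ : ℝ) = 63015 := by
  rw [n₀_eq]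
  norm_num

section MinorArcs

lemma n₀_mul_log_le : n₀ * log (2 / (1 + (49 / 50 : ℝ))) ≤ 636.6 := by
  have hlog := log_le_sub_one_of_pos (show (0 : ℝ) < 2 / (1 + (49 / 50 : ℝ)) by norm_num)
  rw [cast_n₀]
  linarith

lemma lipschitzConst_le : 2 * π * (49 / 50) / (1 - (49 / 50 : ℝ) ^ 2) ≤ 155.6 := by
  rw [div_le_iff₀ (by norm_num)]
  linarith [pi_lt_d4]

lemma mod_mul_log_two_le (n : ℕ) {q : ℕ} (hq : 0 < q) :
    (n % q : ℕ) * log 2 ≤ (q - 1) * 0.6932 := by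
  have hmod : ((n % q : ℕ) : ℝ) + 1 ≤ q := by exact_mod_cast n.mod_lt hq
  nlinarith [log_two_lt_d9, log_two_gt_d9, (n % q).cast_nonneg (α := ℝ)]

variable {q : ℕ} (hq : 0 < q) (hq2500 : q ≤ 2500) {δ : ℝ} (hδ : 0 < δ)
include hq hq2500 hδ

lemma mainTerm_le_of_close (hclose : 63015 * (q * δ) ≤ 3 / 2) (hone : q = 1 → 1 / 63015 ≤ δ) :
    1 / (q ^ 2 * δ) * logDistPrimitive ((49 / 50) ^ q) ((n₀ / q : ℕ) * (q ^ 2 * δ)) +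
      (q - 1) * 0.6932 ≤ 10504 := by
  have hr0 : (0 : ℝ) ≤ (49 / 50) ^ q := by positivity
  have hr1 : (49 / 50 : ℝ) ^ q < 1 := pow_lt_one₀ (by norm_num) (by norm_num) hq.ne'
  rcases (show 1 ≤ q from hq).eq_or_lt' with rfl | hq2
  · have hδ' := hone rfl
    have hprim : logDistPrimitive ((49 / 50) ^ 1) ((n₀ / 1 : ℕ) * ((1 : ℕ) ^ 2 * δ)) ≤ 0 := by
      apply logDistPrimitive_nonpos_of_one_le hr0 hr1 <;>
        simp only [Nat.div_one, cast_n₀, Nat.cast_one] at hclose ⊢ <;> linarith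
    have hterm := mul_nonpos_of_nonneg_of_nonpos
      (show 0 ≤ 1 / (((1 : ℕ) : ℝ) ^ 2 * δ) by positivity) hprim
    push_cast at hterm ⊢
    linarith
  · have hmain : 1 / (q ^ 2 * δ) *
        logDistPrimitive ((49 / 50) ^ q) ((n₀ / q : ℕ) * (q ^ 2 * δ)) ≤ 21005 / q := by
      calc _ ≤ 1 / (q ^ 2 * δ) * ((n₀ / q : ℕ) * (q ^ 2 * δ) / 3) := by
            gcongr
            exact logDistPrimitive_le_third hr0 hr1 (by positivity)
        _ = (n₀ / q : ℕ) / 3 := by field_simp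
        _ ≤ n₀ / q / 3 := by gcongr; exact Nat.cast_div_le
        _ = 21005 / q := by rw [cast_n₀]; ring
    have hq2500' : (q : ℝ) ≤ 2500 := by exact_mod_cast hq2500
    rcases (show 2 ≤ q from hq2).eq_or_lt' with rfl | hq3
    · norm_num at hmain ⊢
      linarith
    · have hthird : (21005 : ℝ) / q ≤ 21005 / 3 := by
        gcongr
        exact_mod_cast hq3
      linarith

lemma mainTerm_le_of_far (hfar : 3 / 2 ≤ 63015 * (q * δ)) (hfar' : 63015 * (q * δ) ≤ 25.2) :
    1 / (q ^ 2 * δ) * logDistPrimitive ((49 / 50) ^ q) ((n₀ / q : ℕ) * (q ^ 2 * δ)) +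
      155.6 * (63015 * (q * δ)) + (q - 1) * 0.6932 ≤ 10831 := by
  set t := 63015 * (q * δ) with ht
  have htpos : 0 < t := by positivity
  have hmain : 1 / (q ^ 2 * δ) *
      logDistPrimitive ((49 / 50) ^ q) ((n₀ / q : ℕ) * (q ^ 2 * δ)) ≤ 63015 / (4 * t) / q := by
    calc _ ≤ 1 / (q ^ 2 * δ) * (1 / 4) := by
          gcongr
          exact logDistPrimitive_le_quarter (by positivity)
            (pow_lt_one₀ (by norm_num) (by norm_num) hq.ne') _
      _ = 63015 / (4 * t) / q := by rw [ht]; field_simp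
  have hchord : 63015 / (4 * t) ≤ 416.8 * (26.7 - t) := by
    rw [div_le_iff₀ (by positivity)]
    nlinarith
  rcases (show 1 ≤ q from hq).eq_or_lt' with rfl | hq2
  · norm_num at hmain ⊢
    linarith
  · have hhalf : 63015 / (4 * t) / q ≤ 63015 / (4 * t) / 2 := by
      gcongr
      exact_mod_cast hq2
    have hq2500' : (q : ℝ) ≤ 2500 := by exact_mod_cast hq2500
    linarith

lemma minorArc_exponent_le {p : ℤ} (hpq : IsCoprime p (q : ℤ)) (hqδ : q * δ ≤ 1 / 2501)
    (hone : q = 1 → 1 / 63015 ≤ δ) :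
    n₀ * log (2 / (1 + 49 / 50)) +
      ∑ k ∈ range n₀, logDist (49 / 50) ((k + 1 : ℕ) * (p / q + δ)) ≤ 11468 := by
  have hsum := sum_logDist_le (r := 49 / 50) (by norm_num) (by norm_num) hq hpq hδ n₀
  have hmod := mod_mul_log_two_le n₀ hq
  have hlog := n₀_mul_log_le
  have hlip := mul_le_mul_of_nonneg_left lipschitzConst_le (show 0 ≤ 63015 * (q * δ) by positivity)
  rw [cast_n₀] at hsum hlog ⊢
  rcases le_total (63015 * (q * δ)) (3 / 2) with hclose | hfar
  · linarith [mainTerm_le_of_close hq hq2500 hδ hclose hone]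
  · linarith [mainTerm_le_of_far hq hq2500 hδ hfar (by linarith)]

end MinorArcs

lemma abs_sineProd_two_pi_mul (n : ℕ) (α : ℝ) :
    |sineProd n (2 * π * α)| = ∏ k ∈ range n, |2 * sin (π * ((k + 1 : ℕ) * α))| := by
  rw [sineProd, abs_prod, range_eq_Ico, prod_Ico_add' (fun k : ℕ => |2 * sin (π * (k * α))|) 0 n 1]
  refine prod_congr rfl fun k _ => ?_
  rw [show k * (2 * π * α) / 2 = π * (k * α) by ring]

lemma abs_sineProd_two_pi_mul_neg (n : ℕ) (α : ℝ) :
    |sineProd n (2 * π * -α)| = |sineProd n (2 * π * α)| := by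
  simp_rw [abs_sineProd_two_pi_mul n, mul_neg, sin_neg, mul_neg, abs_neg]

lemma sineProd_two_pi_mul_div_eq_zero {n q : ℕ} (hq : 0 < q) (hqn : q ≤ n) (p : ℤ) :
    sineProd n (2 * π * (p / q)) = 0 := by
  refine prod_eq_zero (i := q) (mem_Icc.2 ⟨hq, hqn⟩) ?_
  rw [show q * (2 * π * (p / q)) / 2 = p * π by field_simp, sin_int_mul_pi, mul_zero]

lemma abs_sineProd_rat_add_le {q : ℕ} (hq : 0 < q) (hq2500 : q ≤ 2500) {p : ℤ}
    (hpq : IsCoprime p (q : ℤ)) {δ : ℝ} (hδ : 0 < δ) (hqδ : q * δ ≤ 1 / 2501)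
    (hone : q = 1 → 1 / 63015 ≤ δ) :
    |sineProd n₀ (2 * π * (p / q + δ))| ≤ exp 11468 := by
  rw [abs_sineProd_two_pi_mul]
  exact (prod_abs_two_mul_sin_le_exp (r := 49 / 50) (by norm_num) (by norm_num) _ _).trans
    (exp_le_exp.2 (minorArc_exponent_le hq hq2500 hδ hpq hqδ hone))

lemma exists_coprime_mul_abs_sub_div_le (α : ℝ) :
    ∃ (p : ℤ) (q : ℕ), 0 < q ∧ q ≤ 2500 ∧ IsCoprime p (q : ℤ) ∧ q * |α - p / q| ≤ 1 / 2501 := by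
  obtain ⟨x, hx, hxden⟩ := exists_rat_abs_sub_le_and_den_le α (show 0 < 2500 by norm_num)
  refine ⟨x.num, x.den, x.den_pos, hxden, Int.isCoprime_iff_nat_coprime.2 x.reduced, ?_⟩
  rw [← Rat.cast_def]
  refine (mul_le_mul_of_nonneg_left hx x.den.cast_nonneg).trans_eq ?_
  have hden : (x.den : ℝ) ≠ 0 := Nat.cast_ne_zero.2 x.den_ne_zero
  push_cast
  field_simp
  norm_num

theorem abs_sineProd_le_of_two_pi_div_le {θ : ℝ} (hθ0 : 2 * π / n₀ ≤ θ) (hθ : θ ≤ π) :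
    |sineProd n₀ θ| ≤ exp 11468 := by
  obtain ⟨α, rfl⟩ : ∃ α, θ = 2 * π * α := ⟨θ / (2 * π), by field_simp⟩
  have hα0 : 1 / 63015 ≤ α := by
    rw [cast_n₀, div_le_iff₀ (by norm_num)] at hθ0
    nlinarith [two_pi_pos]
  have hα : α ≤ 1 / 2 := by nlinarith [pi_pos]
  obtain ⟨p, q, hq, hq2500, hpq, hqα⟩ := exists_coprime_mul_abs_sub_div_le α
  have hone : q = 1 → 1 / 63015 ≤ |α - p / q| := by
    rintro rfl
    simp only [Nat.cast_one, one_mul, div_one, abs_le] at hqα ⊢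
    have hp0 : p = 0 := by
      have hp1 : (p : ℝ) < 1 := by linarith
      have hp2 : (-1 : ℝ) < p := by linarith
      norm_cast at hp1 hp2
      omega
    rw [hp0, Int.cast_zero, sub_zero]
    exact hα0.trans (le_abs_self α)
  rcases lt_trichotomy (α - p / q) 0 with hneg | hzero | hpos
  · have hα' : -α = (-p : ℤ) / q + |α - p / q| := by
      rw [abs_of_neg hneg]
      push_cast
      ring
    rw [← abs_sineProd_two_pi_mul_neg, hα']
    exact abs_sineProd_rat_add_le hq hq2500 hpq.neg_left (abs_pos.2 hneg.ne) hqα hone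
  · rw [sub_eq_zero.1 hzero, sineProd_two_pi_mul_div_eq_zero hq (by rw [n₀_eq]; omega), abs_zero]
    positivity
  · have hα' : α = p / q + |α - p / q| := by rw [abs_of_pos hpos]; ring
    rw [hα']
    exact abs_sineProd_rat_add_le hq hq2500 hpq (abs_pos.2 hpos.ne') hqα hone

/-! ### The expansion of `1 - π v cot (π v)` and of its averages -/

section CotDefect

/-- The function `1 - π v cot (π v) = 2 ∑ ζ(2j) v ^ (2j)`, minus the logarithmic derivative of
`sin (π v) / v` with respect to `log v`. -/
noncomputable def cotDefect (v : ℝ) : ℝ := 1 - π * v * (cos (π * v) / sin (π * v))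

/-- The zeta value `ζ(2 (j + 1))`, as a real number. -/
noncomputable def evenZeta (j : ℕ) : ℝ := ∑' m : ℕ, 1 / ((m : ℝ) + 1) ^ (2 * (j + 1))

lemma hasSum_evenZeta (j : ℕ) :
    HasSum (fun m : ℕ => 1 / ((m : ℝ) + 1) ^ (2 * (j + 1))) (evenZeta j) := by
  have hsum := (summable_nat_add_iff 1).2 ((summable_one_div_nat_pow (p := 2 * (j + 1))).2 (by lia))
  refine Summable.hasSum ?_
  simpa using hsum

lemma mem_integerComplement_of_mem_Ioo {v : ℝ} (hv0 : 0 < v) (hv1 : v < 1) :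
    (v : ℂ) ∈ Complex.integerComplement := by
  rw [Complex.mem_integerComplement_iff]
  rintro ⟨k, hk⟩
  have hkv : (k : ℝ) = v := by exact_mod_cast hk
  rw [← hkv] at hv0 hv1
  norm_cast at hv0 hv1
  omega

lemma hasSum_cotDefect_partialFractions {v : ℝ} (hv0 : 0 < v) (hv1 : v < 1) :
    HasSum (fun m : ℕ => 2 * v ^ 2 / (((m : ℝ) + 1) ^ 2 - v ^ 2)) (cotDefect v) := by
  have hv := mem_integerComplement_of_mem_Ioo hv0 hv1
  have hv' : (v : ℂ) ≠ 0 := by exact_mod_cast hv0.ne'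
  have hcot := (summable_cotTerm hv).hasSum.mul_left (-(v : ℂ))
  rw [← cot_series_rep' hv] at hcot
  rw [← Complex.hasSum_ofReal]
  convert! hcot using 1
  · funext m
    have hm : (0 : ℝ) < ((m : ℝ) + 1) ^ 2 - v ^ 2 := by nlinarith [m.cast_nonneg (α := ℝ)]
    have hm' : ((m : ℂ) + 1) ^ 2 - (v : ℂ) ^ 2 ≠ 0 := by exact_mod_cast hm.ne'
    have hfactor : ((v : ℂ) + (m + 1)) * (v - (m + 1)) = -(((m : ℂ) + 1) ^ 2 - (v : ℂ) ^ 2) := by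
      ring
    rw [cotTerm_identity hv, hfactor]
    push_cast
    field_simp
  · rw [cotDefect, Complex.cot]
    push_cast
    field_simp
    ring

lemma hasSum_two_mul_geometric {v b : ℝ} (hv : 0 ≤ v) (hvb : v < b) :
    HasSum (fun j : ℕ => 2 * (1 / b ^ (2 * (j + 1))) * v ^ (2 * (j + 1)))
      (2 * v ^ 2 / (b ^ 2 - v ^ 2)) := by
  have hb : 0 < b := hv.trans_lt hvb
  have hratio : (v / b) ^ 2 < 1 := by
    rw [div_pow, div_lt_one (by positivity)]
    gcongr
  have hgeom := (hasSum_geometric_of_lt_one (sq_nonneg (v / b)) hratio).mul_left (2 * (v / b) ^ 2)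
  convert! hgeom using 1
  · funext j
    rw [← pow_mul, mul_assoc 2, mul_assoc 2, ← pow_add, div_pow]
    ring
  · have hsub : b ^ 2 - v ^ 2 ≠ 0 := by nlinarith
    field_simp

lemma hasSum_cotDefect {v : ℝ} (hv0 : 0 < v) (hv1 : v < 1) :
    HasSum (fun j : ℕ => 2 * evenZeta j * v ^ (2 * (j + 1))) (cotDefect v) := by
  let f : ℕ × ℕ → ℝ := fun x => 2 * (1 / ((x.1 : ℝ) + 1) ^ (2 * (x.2 + 1))) * v ^ (2 * (x.2 + 1))
  have hf0 : 0 ≤ f := fun x => by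
    simp only [f, Pi.zero_apply]
    positivity
  have hrow (m : ℕ) : HasSum (fun j => f (m, j)) (2 * v ^ 2 / (((m : ℝ) + 1) ^ 2 - v ^ 2)) :=
    hasSum_two_mul_geometric (b := (m : ℝ) + 1) hv0.le (by linarith [m.cast_nonneg (α := ℝ)])
  have hcot := hasSum_cotDefect_partialFractions hv0 hv1
  have hsummable : Summable f := by
    rw [summable_prod_of_nonneg hf0]
    refine ⟨fun m => (hrow m).summable, ?_⟩
    simp_rw [fun m => (hrow m).tsum_eq]
    exact hcot.summable
  have hf : HasSum f (cotDefect v) := by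
    rw [hcot.unique (hsummable.hasSum.prod_fiberwise hrow)]
    exact hsummable.hasSum
  have hswap : HasSum (f ∘ Prod.swap) (cotDefect v) := (Equiv.prodComm ℕ ℕ).hasSum_iff.2 hf
  refine hswap.prod_fiberwise fun j => ?_
  simp only [f, Function.comp_apply, Prod.swap_prod_mk]
  exact ((hasSum_evenZeta j).mul_left 2).mul_right _

/-- The normalised power sum `n⁻¹ ∑ (k / n) ^ (2j + 2)` over `1 ≤ k ≤ n`. -/
noncomputable def powerMean (n j : ℕ) : ℝ :=
  1 / (n : ℝ) * ∑ k ∈ range n, (((k : ℝ) + 1) / n) ^ (2 * (j + 1))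

/-- The average of `cotDefect` over the points `k y / n`, `1 ≤ k ≤ n`; it governs the logarithmic
derivative of the sine product. -/
noncomputable def meanCotDefect (n : ℕ) (y : ℝ) : ℝ :=
  1 / (n : ℝ) * ∑ k ∈ range n, cotDefect (((k : ℝ) + 1) / n * y)

/-- The coefficient of `y ^ (2j + 2)` in the power series of `meanCotDefect n y`. -/
noncomputable def meanCoeff (n j : ℕ) : ℝ := 2 * evenZeta j * powerMean n j

lemma succ_div_mem_Ioc {n k : ℕ} (hk : k ∈ range n) : ((k : ℝ) + 1) / n ∈ Set.Ioc 0 1 := by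
  have hkn : (k : ℝ) + 1 ≤ n := by exact_mod_cast mem_range.1 hk
  exact ⟨div_pos (by linarith) (by linarith), (div_le_one (by linarith)).2 hkn⟩

lemma hasSum_meanCotDefect (n : ℕ) {y : ℝ} (hy0 : 0 < y) (hy1 : y < 1) :
    HasSum (fun j : ℕ => meanCoeff n j * y ^ (2 * (j + 1))) (meanCotDefect n y) := by
  have hterm : ∀ k ∈ range n,
      HasSum (fun j : ℕ => 2 * evenZeta j * (((k : ℝ) + 1) / n * y) ^ (2 * (j + 1)))
        (cotDefect (((k : ℝ) + 1) / n * y)) := fun k hk => by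
    obtain ⟨hk0, hk1⟩ := succ_div_mem_Ioc hk
    exact hasSum_cotDefect (mul_pos hk0 hy0) (by nlinarith)
  convert! (hasSum_sum hterm).mul_left (1 / (n : ℝ)) using 1
  funext j
  simp_rw [meanCoeff, powerMean, mul_sum, sum_mul, mul_pow]
  exact sum_congr rfl fun k _ => by ring

end CotDefect

section PowerSums

lemma add_one_mul_sub_mul_pow_le (d : ℕ) {a b : ℝ} (ha : 0 ≤ a) (hab : a ≤ b) :
    (d + 1) * ((b - a) * a ^ d) ≤ b ^ (d + 1) - a ^ (d + 1) := by
  induction d with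
  | zero => simp
  | succ d ih =>
    have hpow : (b - a) * a ^ (d + 1) ≤ (b - a) * b ^ (d + 1) := by gcongr
    have hsplit :
        b ^ (d + 2) - a ^ (d + 2) = (b - a) * b ^ (d + 1) + a * (b ^ (d + 1) - a ^ (d + 1)) := by
      ring
    rw [hsplit]
    push_cast
    rw [pow_succ a d] at ih hpow ⊢
    linarith [mul_le_mul_of_nonneg_left ih ha]

lemma pow_succ_sub_pow_succ_le_trapezoid (d : ℕ) {a b : ℝ} (ha : 0 ≤ a) (hab : a ≤ b) :
    b ^ (d + 1) - a ^ (d + 1) ≤ (d + 1) * ((b - a) * (a ^ d + b ^ d) / 2) := by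
  induction d with
  | zero =>
    norm_num
  | succ d ih =>
    have hsplit : b ^ (d + 2) - a ^ (d + 2) =
        ((a + b) * (b ^ (d + 1) - a ^ (d + 1)) + (b - a) * (a ^ (d + 1) + b ^ (d + 1))) / 2 := by
      ring
    have hchebyshev : (a + b) * (a ^ d + b ^ d) ≤ 2 * (a ^ (d + 1) + b ^ (d + 1)) := by
      nlinarith [mul_nonneg (sub_nonneg.2 hab) (sub_nonneg.2 (pow_le_pow_left₀ ha hab d)),
        pow_succ a d, pow_succ b d]
    have hstep : 0 ≤ ((d : ℝ) + 1) * (b - a) / 2 := by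
      have := sub_nonneg.2 hab
      positivity
    rw [hsplit]
    push_cast
    linarith [mul_le_mul_of_nonneg_left ih (show 0 ≤ a + b by linarith),
      mul_le_mul_of_nonneg_left hchebyshev hstep]

lemma le_sum_succ_pow (d n : ℕ) :
    (n : ℝ) ^ (d + 2) / (d + 2) + (n : ℝ) ^ (d + 1) / 2 ≤
      ∑ k ∈ range n, ((k : ℝ) + 1) ^ (d + 1) := by
  induction n with
  | zero => simp
  | succ n ih =>
    have htrap := pow_succ_sub_pow_succ_le_trapezoid (d + 1) (a := n) (b := n + 1) (by positivity)
      (by linarith)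
    have hdiv : ((n : ℝ) + 1) ^ (d + 2) / (d + 2) - (n : ℝ) ^ (d + 2) / (d + 2) ≤
        ((n : ℝ) ^ (d + 1) + ((n : ℝ) + 1) ^ (d + 1)) / 2 := by
      rw [← sub_div, div_le_iff₀ (by positivity)]
      push_cast at htrap
      linarith
    rw [sum_range_succ]
    push_cast
    linarith

lemma sum_succ_pow_le (d n : ℕ) :
    ∑ k ∈ range n, ((k : ℝ) + 1) ^ (d + 1) ≤
      (n : ℝ) ^ (d + 2) / (d + 2) + (n : ℝ) ^ (d + 1) := by
  induction n with
  | zero => simp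
  | succ n ih =>
    have hleft := add_one_mul_sub_mul_pow_le (d + 1) (a := n) (b := n + 1) (by positivity)
      (by linarith)
    have hdiv : (n : ℝ) ^ (d + 1) ≤
        ((n : ℝ) + 1) ^ (d + 2) / (d + 2) - (n : ℝ) ^ (d + 2) / (d + 2) := by
      rw [← sub_div, le_div_iff₀ (by positivity)]
      push_cast at hleft
      linarith
    rw [sum_range_succ]
    push_cast
    linarith

lemma powerMean_eq_sum_div (n j : ℕ) :
    powerMean n j = (∑ k ∈ range n, ((k : ℝ) + 1) ^ (2 * j + 1 + 1)) / (n : ℝ) ^ (2 * j + 3) := by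
  simp_rw [powerMean, div_pow, ← sum_div, show 2 * (j + 1) = 2 * j + 1 + 1 by ring]
  rw [div_mul_div_comm, one_mul, show (n : ℝ) ^ (2 * j + 3) = n * (n : ℝ) ^ (2 * j + 1 + 1) by ring]

lemma le_powerMean {n : ℕ} (hn : 0 < n) (j : ℕ) :
    1 / (2 * (j : ℝ) + 3) + 1 / (2 * n) ≤ powerMean n j := by
  have hsum := le_sum_succ_pow (2 * j + 1) n
  push_cast at hsum
  rw [powerMean_eq_sum_div, le_div_iff₀ (by positivity)]
  refine le_of_eq_of_le ?_ hsum
  field_simp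
  ring

lemma powerMean_le {n : ℕ} (hn : 0 < n) (j : ℕ) :
    powerMean n j ≤ 1 / (2 * (j : ℝ) + 3) + 1 / n := by
  have hsum := sum_succ_pow_le (2 * j + 1) n
  push_cast at hsum
  rw [powerMean_eq_sum_div, div_le_iff₀ (by positivity)]
  refine hsum.trans_eq ?_
  field_simp
  ring

lemma powerMean_nonneg (n j : ℕ) : 0 ≤ powerMean n j := by
  unfold powerMean
  positivity

end PowerSums

/-! ### Numerical bounds for `ζ` at even integers -/

section EvenZeta

lemma evenZeta_zero : evenZeta 0 = π ^ 2 / 6 :=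
  (hasSum_evenZeta 0).unique (by simpa using (hasSum_nat_add_iff' 1).2 hasSum_zeta_two)

lemma evenZeta_one : evenZeta 1 = π ^ 4 / 90 :=
  (hasSum_evenZeta 1).unique (by simpa using (hasSum_nat_add_iff' 1).2 hasSum_zeta_four)

lemma sum_le_evenZeta (j K : ℕ) :
    ∑ m ∈ range K, 1 / ((m : ℝ) + 1) ^ (2 * (j + 1)) ≤ evenZeta j :=
  sum_le_hasSum _ (fun m _ => by positivity) (hasSum_evenZeta j)

-- Every term of the tail of `ζ(2j+2)` beyond `K` is at most `(K+1) ^ (2i-2j)` times that of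
-- `ζ(2i+2)`.
lemma evenZeta_sub_sum_le {i j : ℕ} (hij : i ≤ j) (K : ℕ) :
    evenZeta j - ∑ m ∈ range K, 1 / ((m : ℝ) + 1) ^ (2 * (j + 1)) ≤
      1 / ((K : ℝ) + 1) ^ (2 * (j - i)) *
        (evenZeta i - ∑ m ∈ range K, 1 / ((m : ℝ) + 1) ^ (2 * (i + 1))) := by
  refine hasSum_le (fun m => ?_) ((hasSum_nat_add_iff' K).2 (hasSum_evenZeta j))
    (((hasSum_nat_add_iff' K).2 (hasSum_evenZeta i)).mul_left _)
  rw [show 2 * (j + 1) = 2 * (j - i) + 2 * (i + 1) by omega, pow_add, div_mul_div_comm, one_mul]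
  push_cast
  gcongr
  linarith [m.cast_nonneg (α := ℝ)]

lemma one_le_evenZeta (j : ℕ) : 1 ≤ evenZeta j := by
  simpa using sum_le_evenZeta j 1

lemma evenZeta_antitone : Antitone evenZeta := fun i j hij => by
  simpa using evenZeta_sub_sum_le hij 0

lemma evenZeta_zero_bounds : 1.644934 ≤ evenZeta 0 ∧ evenZeta 0 ≤ 1.644935 := by
  rw [evenZeta_zero]
  constructor <;> nlinarith [pi_gt_d20, pi_lt_d20]

lemma evenZeta_one_bounds : 1.082323 ≤ evenZeta 1 ∧ evenZeta 1 ≤ 1.0823233 := by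
  have hlower : (3.14159265 : ℝ) ^ 4 ≤ π ^ 4 := by
    gcongr
    linarith [pi_gt_d20]
  have hupper : π ^ 4 ≤ (3.14159266 : ℝ) ^ 4 := by
    gcongr
    linarith [pi_lt_d20]
  rw [evenZeta_one]
  constructor <;> linarith

lemma evenZeta_two_bounds : 1.0173 ≤ evenZeta 2 ∧ evenZeta 2 ≤ 1.0174642 := by
  have hlower := sum_le_evenZeta 2 5
  have hupper := evenZeta_sub_sum_le (show 1 ≤ 2 by norm_num) 3
  have hone := evenZeta_one_bounds.2
  norm_num [sum_range_succ] at hlower hupper hone ⊢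
  constructor <;> linarith

lemma evenZeta_three_bounds : 1.004058 ≤ evenZeta 3 ∧ evenZeta 3 ≤ 1.004088 := by
  have hlower := sum_le_evenZeta 3 3
  have hupper := evenZeta_sub_sum_le (show 1 ≤ 3 by norm_num) 3
  have hone := evenZeta_one_bounds.2
  norm_num [sum_range_succ] at hlower hupper hone ⊢
  constructor <;> linarith

lemma evenZeta_four_bounds : 1.00097 ≤ evenZeta 4 ∧ evenZeta 4 ≤ 1.000996 := by
  have hlower := sum_le_evenZeta 4 2
  have hupper := evenZeta_sub_sum_le (show 1 ≤ 4 by norm_num) 3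
  have hone := evenZeta_one_bounds.2
  norm_num [sum_range_succ] at hlower hupper hone ⊢
  constructor <;> linarith

lemma evenZeta_five_le : evenZeta 5 ≤ 1.00025 := by
  have hupper := evenZeta_sub_sum_le (show 1 ≤ 5 by norm_num) 3
  have hone := evenZeta_one_bounds.2
  norm_num [sum_range_succ] at hupper hone ⊢
  linarith

lemma evenZeta_add_five_sub_one_le (j : ℕ) :
    evenZeta (j + 5) - 1 ≤ 0.00025 * (1 / 4) ^ j := by
  have htail := evenZeta_sub_sum_le (Nat.le_add_left 5 j) 1
  have hpow : (1 : ℝ) / (1 + 1) ^ (2 * j) = (1 / 4) ^ j := by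
    rw [pow_mul, one_div_pow]
    norm_num
  simp only [sum_range_one, Nat.cast_zero, zero_add, one_pow, div_one, Nat.cast_one,
    Nat.add_sub_cancel, hpow] at htail
  refine htail.trans ?_
  rw [mul_comm]
  gcongr
  linarith [evenZeta_five_le]

end EvenZeta

/-! ### Bounds for the averaged cotangent series -/

section MeanCotDefect

lemma meanCoeff_nonneg (n j : ℕ) : 0 ≤ meanCoeff n j :=
  mul_nonneg (by linarith [one_le_evenZeta j]) (powerMean_nonneg n j)

/-- The function `2 (artanh c / c - 1) = ∑ 2 c ^ (2j + 2) / (2j + 3)`, the main term of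
`meanCotDefect n c`. -/
noncomputable def artanhDefect (c : ℝ) : ℝ := log ((1 + c) / (1 - c)) / c - 2

variable {c : ℝ} (hc0 : 0 < c) (hc1 : c < 1)
include hc0 hc1

lemma hasSum_two_mul_pow :
    HasSum (fun j : ℕ => 2 * c ^ (2 * (j + 1))) (2 * c ^ 2 / (1 - c ^ 2)) := by
  simpa using hasSum_two_mul_geometric hc0.le hc1

lemma hasSum_artanhDefect :
    HasSum (fun j : ℕ => 2 * (1 / (2 * (j : ℝ) + 3)) * c ^ (2 * (j + 1))) (artanhDefect c) := by
  have hlog := hasSum_log_sub_log_of_abs_lt_one (x := c) (by rwa [abs_of_pos hc0])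
  rw [← log_div (by linarith) (by linarith)] at hlog
  convert! ((hasSum_nat_add_iff' 1).2 hlog).mul_left (1 / c) using 1
  · funext j
    rw [pow_succ c (2 * (j + 1))]
    push_cast
    field_simp
    ring
  · simp only [artanhDefect, sum_range_one]
    field_simp
    norm_num [mul_comm]

lemma hasSum_two_mul_add_two_mul_pow :
    HasSum (fun j : ℕ => 2 * (2 * (j : ℝ) + 2) * c ^ (2 * (j + 1)))
      (4 * c ^ 2 / (1 - c ^ 2) ^ 2) := by
  have hgeom := hasSum_coe_mul_geometric_of_norm_lt_one (r := c ^ 2)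
    (by rw [norm_eq_abs, abs_of_nonneg (sq_nonneg c)]; nlinarith)
  convert! ((hasSum_nat_add_iff' 1).2 hgeom).mul_left 4 using 1
  · funext j
    push_cast
    rw [pow_mul]
    ring
  · simp
    ring

lemma summable_evenZeta_sub_one_mul {w : ℕ → ℝ} (hw0 : ∀ j, 0 ≤ w j) {b : ℝ}
    (hwb : ∀ j, w j ≤ b) :
    Summable fun j : ℕ => 2 * (evenZeta j - 1) * w j * c ^ (2 * (j + 1)) := by
  refine Summable.of_nonneg_of_le (fun j => ?_) (fun j => ?_)
    ((hasSum_two_mul_pow hc0 hc1).summable.mul_left b)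
  · have hζ := sub_nonneg.2 (one_le_evenZeta j)
    have hwj := hw0 j
    positivity
  · have hζ1 : evenZeta j - 1 ≤ 1 := by
      linarith [evenZeta_antitone j.zero_le, evenZeta_zero_bounds.2]
    calc 2 * (evenZeta j - 1) * w j * c ^ (2 * (j + 1)) ≤ 2 * 1 * b * c ^ (2 * (j + 1)) := by
          gcongr
          · exact hw0 j
          · exact hwb j
      _ = b * (2 * c ^ (2 * (j + 1))) := by ring

lemma le_sum_range_five_add_tail {w : ℕ → ℝ} (hw0 : ∀ j, 0 ≤ w j) {b : ℝ}
    (hwb : ∀ j, w (j + 5) ≤ b) {s : ℝ}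
    (hs : HasSum (fun j : ℕ => 2 * (evenZeta j - 1) * w j * c ^ (2 * (j + 1))) s) :
    s ≤ ∑ j ∈ range 5, 2 * (evenZeta j - 1) * w j * c ^ (2 * (j + 1)) +
      2 * 0.00025 * b * c ^ 12 / (1 - c ^ 2 / 4) := by
  have hgeom := (hasSum_geometric_of_lt_one (r := c ^ 2 / 4) (by positivity)
    (by nlinarith)).mul_left (2 * 0.00025 * b * c ^ 12)
  have htail := hasSum_le (fun j => ?_) ((hasSum_nat_add_iff' 5).2 hs) hgeom
  · rw [← div_eq_mul_inv] at htail
    linarith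
  · calc 2 * (evenZeta (j + 5) - 1) * w (j + 5) * c ^ (2 * (j + 5 + 1))
        ≤ 2 * (0.00025 * (1 / 4) ^ j) * b * c ^ (2 * (j + 5 + 1)) := by
          gcongr
          · exact hw0 _
          · exact evenZeta_add_five_sub_one_le j
          · exact hwb j
      _ = 2 * 0.00025 * b * c ^ 12 * (c ^ 2 / 4) ^ j := by
          rw [show 2 * (j + 5 + 1) = 12 + 2 * j by ring, pow_add, pow_mul, div_pow, div_pow]
          ring

variable {n : ℕ} (hn : 0 < n)
include hn

lemma le_meanCotDefect :
    artanhDefect c + 2 * c ^ 2 / (1 - c ^ 2) / (2 * n) +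
      ∑ j ∈ range 5, 2 * (evenZeta j - 1) * (1 / (2 * (j : ℝ) + 3) + 1 / (2 * n)) *
        c ^ (2 * (j + 1)) ≤ meanCotDefect n c := by
  have hdiff := ((hasSum_meanCotDefect n hc0 hc1).sub (hasSum_artanhDefect hc0 hc1)).sub
    ((hasSum_two_mul_pow hc0 hc1).div_const (2 * (n : ℝ)))
  have hterm (j : ℕ) : 2 * (evenZeta j - 1) * (1 / (2 * (j : ℝ) + 3) + 1 / (2 * n)) *
      c ^ (2 * (j + 1)) ≤ meanCoeff n j * c ^ (2 * (j + 1)) -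
        2 * (1 / (2 * (j : ℝ) + 3)) * c ^ (2 * (j + 1)) - 2 * c ^ (2 * (j + 1)) / (2 * n) := by
    have hζ := one_le_evenZeta j
    have hcoeff : 2 * evenZeta j * (1 / (2 * (j : ℝ) + 3) + 1 / (2 * n)) * c ^ (2 * (j + 1)) ≤
        meanCoeff n j * c ^ (2 * (j + 1)) := by
      unfold meanCoeff
      gcongr
      exact le_powerMean hn j
    rw [show 2 * c ^ (2 * (j + 1)) / (2 * n) = 2 * (1 / (2 * (n : ℝ))) * c ^ (2 * (j + 1)) by ring]
    linarith
  have hpartial := sum_le_hasSum (range 5) (fun j _ => (hterm j).trans' ?_) hdiff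
  · linarith [sum_le_sum (s := range 5) fun j _ => hterm j]
  · have hζ := sub_nonneg.2 (one_le_evenZeta j)
    positivity

lemma meanCotDefect_le :
    meanCotDefect n c ≤ artanhDefect c + 2 * c ^ 2 / (1 - c ^ 2) / n +
      ∑ j ∈ range 5, 2 * (evenZeta j - 1) * (1 / (2 * (j : ℝ) + 3) + 1 / n) * c ^ (2 * (j + 1)) +
      2 * 0.00025 * (1 / 13 + 1 / n) * c ^ 12 / (1 - c ^ 2 / 4) := by
  have hw0 (j : ℕ) : 0 ≤ 1 / (2 * (j : ℝ) + 3) + 1 / (n : ℝ) := by positivity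
  have hwb (j : ℕ) : 1 / (2 * (j : ℝ) + 3) + 1 / (n : ℝ) ≤ 1 / 3 + 1 / n := by
    gcongr
    linarith [j.cast_nonneg (α := ℝ)]
  have hwb5 (j : ℕ) : 1 / (2 * ((j + 5 : ℕ) : ℝ) + 3) + 1 / (n : ℝ) ≤ 1 / 13 + 1 / n := by
    gcongr
    push_cast
    linarith [j.cast_nonneg (α := ℝ)]
  have hcorr := (summable_evenZeta_sub_one_mul hc0 hc1 hw0 hwb).hasSum
  have hmajor := ((hasSum_artanhDefect hc0 hc1).add
    ((hasSum_two_mul_pow hc0 hc1).div_const (n : ℝ))).add hcorr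
  have hle := hasSum_le (fun j => ?_) (hasSum_meanCotDefect n hc0 hc1) hmajor
  · linarith [le_sum_range_five_add_tail hc0 hc1 hw0 hwb5 hcorr]
  · have hζ := one_le_evenZeta j
    have hcoeff : meanCoeff n j * c ^ (2 * (j + 1)) ≤
        2 * evenZeta j * (1 / (2 * (j : ℝ) + 3) + 1 / n) * c ^ (2 * (j + 1)) := by
      unfold meanCoeff
      gcongr
      exact powerMean_le hn j
    rw [show 2 * c ^ (2 * (j + 1)) / n = 2 * (1 / (n : ℝ)) * c ^ (2 * (j + 1)) by ring]
    linarith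

end MeanCotDefect

section MeanSlope

/-- The derivative `y σ'(y)` of `σ = meanCotDefect n` with respect to `log y`, as a power series. -/
noncomputable def meanSlope (n : ℕ) (y : ℝ) : ℝ :=
  ∑' j : ℕ, meanCoeff n j * (2 * (j : ℝ) + 2) * y ^ (2 * (j + 1))

lemma one_sub_one_div_eq_mul (j : ℕ) :
    1 - 1 / (2 * (j : ℝ) + 3) = (2 * (j : ℝ) + 2) * (1 / (2 * (j : ℝ) + 3)) := by
  field_simp
  ring

lemma one_sub_one_div_mem_Icc (j : ℕ) : 1 - 1 / (2 * (j : ℝ) + 3) ∈ Set.Icc 0 1 := by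
  have hpos : 0 ≤ 1 / (2 * (j : ℝ) + 3) := by positivity
  refine ⟨?_, by linarith⟩
  rw [one_sub_one_div_eq_mul]
  positivity

lemma hasSum_meanSlope_limit {c : ℝ} (hc0 : 0 < c) (hc1 : c < 1) :
    HasSum (fun j : ℕ => 2 * evenZeta j * (1 - 1 / (2 * (j : ℝ) + 3)) * c ^ (2 * (j + 1)))
      (2 * c ^ 2 / (1 - c ^ 2) - artanhDefect c +
        ∑' j : ℕ, 2 * (evenZeta j - 1) * (1 - 1 / (2 * (j : ℝ) + 3)) * c ^ (2 * (j + 1))) := by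
  have hcorr := (summable_evenZeta_sub_one_mul hc0 hc1 (fun j => (one_sub_one_div_mem_Icc j).1)
    fun j => (one_sub_one_div_mem_Icc j).2).hasSum
  convert! ((hasSum_two_mul_pow hc0 hc1).sub (hasSum_artanhDefect hc0 hc1)).add hcorr using 1
  funext j
  ring

variable {n : ℕ} (hn : 0 < n)
include hn

lemma le_meanCoeff_mul (j : ℕ) :
    2 * evenZeta j * (1 - 1 / (2 * (j : ℝ) + 3)) ≤ meanCoeff n j * (2 * (j : ℝ) + 2) := by
  have hζ := one_le_evenZeta j
  have hmean : 1 / (2 * (j : ℝ) + 3) ≤ powerMean n j :=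
    (le_add_of_nonneg_right (by positivity)).trans (le_powerMean hn j)
  calc 2 * evenZeta j * (1 - 1 / (2 * (j : ℝ) + 3))
      = 2 * evenZeta j * (1 / (2 * (j : ℝ) + 3)) * (2 * (j : ℝ) + 2) := by
        rw [one_sub_one_div_eq_mul]
        ring
    _ ≤ meanCoeff n j * (2 * (j : ℝ) + 2) := by
        unfold meanCoeff
        gcongr

lemma meanCoeff_mul_le (j : ℕ) :
    meanCoeff n j * (2 * (j : ℝ) + 2) ≤
      2 * evenZeta j * (1 - 1 / (2 * (j : ℝ) + 3)) + 1.645 / n * (2 * (2 * (j : ℝ) + 2)) := by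
  have hζ := one_le_evenZeta j
  have hζ0 : evenZeta j ≤ 1.645 := by
    linarith [evenZeta_antitone j.zero_le, evenZeta_zero_bounds.2]
  calc meanCoeff n j * (2 * (j : ℝ) + 2)
      ≤ 2 * evenZeta j * (1 / (2 * (j : ℝ) + 3) + 1 / n) * (2 * (j : ℝ) + 2) := by
        unfold meanCoeff
        gcongr
        exact powerMean_le hn j
    _ = 2 * evenZeta j * (1 - 1 / (2 * (j : ℝ) + 3)) +
          evenZeta j / n * (2 * (2 * (j : ℝ) + 2)) := by
        rw [one_sub_one_div_eq_mul]
        ring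
    _ ≤ _ := by gcongr

lemma meanSlope_term_le {c : ℝ} (hc0 : 0 < c) (j : ℕ) :
    meanCoeff n j * (2 * (j : ℝ) + 2) * c ^ (2 * (j + 1)) ≤
      2 * evenZeta j * (1 - 1 / (2 * (j : ℝ) + 3)) * c ^ (2 * (j + 1)) +
        1.645 / n * (2 * (2 * (j : ℝ) + 2) * c ^ (2 * (j + 1))) := by
  refine (mul_le_mul_of_nonneg_right (meanCoeff_mul_le hn j) (by positivity)).trans_eq ?_
  ring

variable {c : ℝ} (hc0 : 0 < c) (hc1 : c < 1)
include hc0 hc1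

lemma hasSum_meanSlope :
    HasSum (fun j : ℕ => meanCoeff n j * (2 * (j : ℝ) + 2) * c ^ (2 * (j + 1)))
      (meanSlope n c) := by
  refine (Summable.of_nonneg_of_le (fun j => ?_) (meanSlope_term_le hn hc0)
    ((hasSum_meanSlope_limit hc0 hc1).summable.add
      ((hasSum_two_mul_add_two_mul_pow hc0 hc1).summable.mul_left _))).hasSum
  have hcoeff := meanCoeff_nonneg n j
  positivity

lemma le_meanSlope :
    2 * c ^ 2 / (1 - c ^ 2) - artanhDefect c +
      ∑ j ∈ range 5, 2 * (evenZeta j - 1) * (1 - 1 / (2 * (j : ℝ) + 3)) * c ^ (2 * (j + 1)) ≤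
      meanSlope n c := by
  have hle := hasSum_le (fun j => mul_le_mul_of_nonneg_right (le_meanCoeff_mul hn j)
    (by positivity)) (hasSum_meanSlope_limit hc0 hc1) (hasSum_meanSlope hn hc0 hc1)
  refine hle.trans' (add_le_add_right (Summable.sum_le_tsum _ (fun j _ => ?_)
    (summable_evenZeta_sub_one_mul hc0 hc1 (fun j => (one_sub_one_div_mem_Icc j).1)
      fun j => (one_sub_one_div_mem_Icc j).2)) _)
  have hζ := sub_nonneg.2 (one_le_evenZeta j)
  have hw := (one_sub_one_div_mem_Icc j).1
  positivity

lemma meanSlope_le :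
    meanSlope n c ≤ 2 * c ^ 2 / (1 - c ^ 2) - artanhDefect c +
      ∑ j ∈ range 5, 2 * (evenZeta j - 1) * (1 - 1 / (2 * (j : ℝ) + 3)) * c ^ (2 * (j + 1)) +
      2 * 0.00025 * 1 * c ^ 12 / (1 - c ^ 2 / 4) + 1.645 / n * (4 * c ^ 2 / (1 - c ^ 2) ^ 2) := by
  have hle := hasSum_le (meanSlope_term_le hn hc0) (hasSum_meanSlope hn hc0 hc1)
    ((hasSum_meanSlope_limit hc0 hc1).add
      ((hasSum_two_mul_add_two_mul_pow hc0 hc1).mul_left (1.645 / (n : ℝ))))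
  have htail := le_sum_range_five_add_tail hc0 hc1 (fun j => (one_sub_one_div_mem_Icc j).1)
    (fun j => (one_sub_one_div_mem_Icc (j + 5)).2)
    (summable_evenZeta_sub_one_mul hc0 hc1 (fun j => (one_sub_one_div_mem_Icc j).1)
      fun j => (one_sub_one_div_mem_Icc j).2).hasSum
  linarith

end MeanSlope

/-! ### Three-point inequalities for the averaged cotangent series -/

section ThreePoint

lemma mul_sq_sub_mul_le_pow (e : ℕ) {x : ℝ} (hx : 0 ≤ x) :
    ((e : ℝ) + 1) * x ^ 2 - e * x ≤ x ^ (e + 2) := by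
  induction e with
  | zero => simp
  | succ e ih =>
    have hsq : 0 ≤ ((e : ℝ) + 1) * (x * (x - 1) ^ 2) := by positivity
    rw [show x ^ (e + 1 + 2) = x * x ^ (e + 2) by ring]
    push_cast
    nlinarith [mul_le_mul_of_nonneg_left ih hx]

lemma pow_sub_one_sub_mul_eq (e : ℕ) (x : ℝ) :
    x ^ e - 1 - e * (x - 1) = (∑ j ∈ range e, ∑ i ∈ range j, x ^ i) * (x - 1) ^ 2 := by
  have hcount : (e : ℝ) * (x - 1) = (∑ j ∈ range e, 1) * (x - 1) := by simp
  rw [hcount, ← geom_sum_mul, ← sub_mul, ← sum_sub_distrib, sq, ← mul_assoc]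
  congr 1
  rw [sum_mul]
  exact sum_congr rfl fun j _ => (geom_sum_mul x j).symm

lemma pow_remainder_mul_le (e : ℕ) {x y : ℝ} (hx : 0 ≤ x) (hxy : x ≤ y) :
    (x ^ e - 1 - e * (x - 1)) * (y - 1) ^ 2 ≤ (y ^ e - 1 - e * (y - 1)) * (x - 1) ^ 2 := by
  rw [pow_sub_one_sub_mul_eq, pow_sub_one_sub_mul_eq, mul_right_comm]
  gcongr

variable {n : ℕ} {c y z : ℝ}

lemma meanCoeff_mul_pow_eq (hc : 0 < c) (y : ℝ) (j : ℕ) :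
    meanCoeff n j * y ^ (2 * (j + 1)) =
      meanCoeff n j * c ^ (2 * (j + 1)) * (y / c) ^ (2 * (j + 1)) := by
  rw [mul_assoc, ← mul_pow, mul_div_cancel₀ _ hc.ne']

lemma meanCoeff_mul_pow_nonneg (n j : ℕ) (hc : 0 < c) :
    0 ≤ meanCoeff n j * c ^ (2 * (j + 1)) :=
  mul_nonneg (meanCoeff_nonneg n j) (by positivity)

lemma le_meanCotDefect_of_slope (hn : 0 < n) (hc0 : 0 < c) (hc1 : c < 1) (hy0 : 0 < y)
    (hy1 : y < 1) :
    (meanSlope n c - meanCotDefect n c) * (y / c) ^ 2 -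
      (meanSlope n c - 2 * meanCotDefect n c) * (y / c) ≤ meanCotDefect n y := by
  have hslope := hasSum_meanSlope hn hc0 hc1
  have hc := hasSum_meanCotDefect n hc0 hc1
  refine hasSum_le (fun j => ?_) (((hslope.sub hc).mul_right ((y / c) ^ 2)).sub
    ((hslope.sub (hc.mul_left 2)).mul_right (y / c))) (hasSum_meanCotDefect n hy0 hy1)
  have hpow := mul_sq_sub_mul_le_pow (2 * j) (x := y / c) (by positivity)
  rw [meanCoeff_mul_pow_eq hc0 y, show 2 * (j + 1) = 2 * j + 2 by ring]
  refine (mul_le_mul_of_nonneg_left hpow (meanCoeff_mul_pow_nonneg n j hc0)).trans_eq' ?_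
  push_cast
  ring

lemma meanCotDefect_remainder_mul_le (hn : 0 < n) (hc0 : 0 < c) (hc1 : c < 1) (hy0 : 0 < y)
    (hyz : y ≤ z) (hz1 : z < 1) :
    (meanCotDefect n y - meanCotDefect n c - meanSlope n c * (y / c - 1)) * (z / c - 1) ^ 2 ≤
      (meanCotDefect n z - meanCotDefect n c - meanSlope n c * (z / c - 1)) *
        (y / c - 1) ^ 2 := by
  have hslope := hasSum_meanSlope hn hc0 hc1
  have hc := hasSum_meanCotDefect n hc0 hc1
  have hy := hasSum_meanCotDefect n hy0 (hyz.trans_lt hz1)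
  have hz := hasSum_meanCotDefect n (hy0.trans_le hyz) hz1
  refine hasSum_le (fun j => ?_)
    (((hy.sub hc).sub (hslope.mul_right (y / c - 1))).mul_right ((z / c - 1) ^ 2))
    (((hz.sub hc).sub (hslope.mul_right (z / c - 1))).mul_right ((y / c - 1) ^ 2))
  have hpow := mul_le_mul_of_nonneg_left
    (pow_remainder_mul_le (2 * (j + 1)) (x := y / c) (y := z / c) (by positivity) (by gcongr))
    (meanCoeff_mul_pow_nonneg n j hc0)
  push_cast at hpow
  rw [meanCoeff_mul_pow_eq hc0 y, meanCoeff_mul_pow_eq hc0 z]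
  linarith

lemma meanCotDefect_le_mul_sq (hy0 : 0 < y) (hyz : y ≤ z) (hz1 : z < 1) :
    meanCotDefect n y ≤ meanCotDefect n z * (y / z) ^ 2 := by
  have hz0 := hy0.trans_le hyz
  refine hasSum_le (fun j => ?_) (hasSum_meanCotDefect n hy0 (hyz.trans_lt hz1))
    ((hasSum_meanCotDefect n hz0 hz1).mul_right ((y / z) ^ 2))
  rw [meanCoeff_mul_pow_eq hz0 y]
  exact mul_le_mul_of_nonneg_left
    (pow_le_pow_of_le_one (by positivity) (div_le_one_of_le₀ hyz hz0.le) (by lia))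
    (meanCoeff_mul_pow_nonneg n j hz0)

end ThreePoint

/-! ### Numerical bounds for the averaged cotangent series at `n = 63015` -/

section Numerics

lemma log_two_pow_mul_bounds (k : ℕ) {x : ℝ} (hx0 : 0 ≤ x) (hx1 : x < 1) :
    k * 0.6931471803 + 2 * (x + x ^ 3 / 3 + x ^ 5 / 5) ≤ log (2 ^ k * ((1 + x) / (1 - x))) ∧
      log (2 ^ k * ((1 + x) / (1 - x))) ≤
        k * 0.6931471808 + 2 * (x + x ^ 3 / 3 + x ^ 5 / 5 + x ^ 7 / (1 - x ^ 2)) := by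
  have hlower := sum_range_le_log_div hx0 hx1 3
  have hupper := log_div_le_sum_range_add hx0 hx1 3
  have hquot : 0 < (1 + x) / (1 - x) := div_pos (by linarith) (by linarith)
  rw [log_mul (by positivity) hquot.ne', log_pow]
  norm_num [sum_range_succ] at hlower hupper
  constructor <;> nlinarith [log_two_gt_d9, log_two_lt_d9]

lemma log_163_div_19_bounds :
    2.149311219 ≤ log (163 / 19) ∧ log (163 / 19) ≤ 2.149311225 := by
  have hlog := log_two_pow_mul_bounds 3 (x := 11 / 315) (by norm_num) (by norm_num)
  norm_num at hlog ⊢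
  constructor <;> linarith

lemma log_181_div_19_le : log (181 / 19) ≤ 2.2540582 := by
  have hlog := (log_two_pow_mul_bounds 3 (x := 29 / 333) (by norm_num) (by norm_num)).2
  norm_num at hlog ⊢
  linarith

lemma log_19_le : log 19 ≤ 2.94446 := by
  have hlog := (log_two_pow_mul_bounds 4 (x := 3 / 35) (by norm_num) (by norm_num)).2
  norm_num at hlog ⊢
  linarith

lemma log_33_div_7_le : log (33 / 7) ≤ 1.5507 := by
  have hlog := (log_two_pow_mul_bounds 2 (x := 5 / 61) (by norm_num) (by norm_num)).2
  norm_num at hlog ⊢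
  linarith

lemma n₀_pos : 0 < n₀ := by
  rw [n₀_eq]
  norm_num

lemma sum_evenZeta_sub_one_le {w : ℕ → ℝ} (hw : ∀ j, 0 ≤ w j) :
    ∑ j ∈ range 5, 2 * (evenZeta j - 1) * w j ≤
      1.28987 * w 0 + 0.1646466 * w 1 + 0.0349284 * w 2 + 0.008176 * w 3 + 0.001992 * w 4 := by
  have h0 := mul_le_mul_of_nonneg_right evenZeta_zero_bounds.2 (hw 0)
  have h1 := mul_le_mul_of_nonneg_right evenZeta_one_bounds.2 (hw 1)
  have h2 := mul_le_mul_of_nonneg_right evenZeta_two_bounds.2 (hw 2)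
  have h3 := mul_le_mul_of_nonneg_right evenZeta_three_bounds.2 (hw 3)
  have h4 := mul_le_mul_of_nonneg_right evenZeta_four_bounds.2 (hw 4)
  simp only [sum_range_succ, sum_range_zero]
  linarith

lemma le_sum_evenZeta_sub_one {w : ℕ → ℝ} (hw : ∀ j, 0 ≤ w j) :
    1.289868 * w 0 + 0.164646 * w 1 + 0.0346 * w 2 + 0.008116 * w 3 + 0.00194 * w 4 ≤
      ∑ j ∈ range 5, 2 * (evenZeta j - 1) * w j := by
  have h0 := mul_le_mul_of_nonneg_right evenZeta_zero_bounds.1 (hw 0)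
  have h1 := mul_le_mul_of_nonneg_right evenZeta_one_bounds.1 (hw 1)
  have h2 := mul_le_mul_of_nonneg_right evenZeta_two_bounds.1 (hw 2)
  have h3 := mul_le_mul_of_nonneg_right evenZeta_three_bounds.1 (hw 3)
  have h4 := mul_le_mul_of_nonneg_right evenZeta_four_bounds.1 (hw 4)
  simp only [sum_range_succ, sum_range_zero]
  linarith

lemma meanCotDefect_n₀_le {y : ℝ} (hy0 : 0 < y) (hy1 : y < 1) :
    meanCotDefect n₀ y ≤ artanhDefect y + 2 * y ^ 2 / (1 - y ^ 2) / 63015 +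
      (1.28987 * ((1 / 3 + 1 / 63015) * y ^ 2) + 0.1646466 * ((1 / 5 + 1 / 63015) * y ^ 4) +
        0.0349284 * ((1 / 7 + 1 / 63015) * y ^ 6) + 0.008176 * ((1 / 9 + 1 / 63015) * y ^ 8) +
        0.001992 * ((1 / 11 + 1 / 63015) * y ^ 10)) +
      2 * 0.00025 * (1 / 13 + 1 / 63015) * y ^ 12 / (1 - y ^ 2 / 4) := by
  have hle := meanCotDefect_le hy0 hy1 n₀_pos
  have hzeta := sum_evenZeta_sub_one_le
    (w := fun j => (1 / (2 * (j : ℝ) + 3) + 1 / 63015) * y ^ (2 * (j + 1)))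
    fun j => by positivity
  simp only [← mul_assoc] at hzeta
  rw [cast_n₀] at hle
  norm_num at hle hzeta ⊢
  linarith

lemma meanCotDefect_n₀_bounds :
    1 - 2.8885 / 63015 ≤ meanCotDefect n₀ (72 / 91) ∧
      meanCotDefect n₀ (72 / 91) ≤ 1 + 0.262 / 63015 := by
  have hlower := le_meanCotDefect (c := 72 / 91) (by norm_num) (by norm_num) n₀_pos
  have hupper := meanCotDefect_n₀_le (y := 72 / 91) (by norm_num) (by norm_num)
  have hzeta := le_sum_evenZeta_sub_one
    (w := fun j => (1 / (2 * (j : ℝ) + 3) + 1 / (2 * 63015)) * (72 / 91) ^ (2 * (j + 1)))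
    fun j => by positivity
  have hlog := log_163_div_19_bounds
  simp only [← mul_assoc] at hzeta
  rw [cast_n₀] at hlower
  unfold artanhDefect at hlower hupper
  norm_num at hlower hupper hzeta hlog ⊢
  constructor <;> linarith

lemma meanSlope_n₀_bounds :
    4.0820 ≤ meanSlope n₀ (72 / 91) / (72 / 91) ∧
      meanSlope n₀ (72 / 91) / (72 / 91) ≤ 4.0828 := by
  have hlower := le_meanSlope n₀_pos (c := 72 / 91) (by norm_num) (by norm_num)
  have hupper := meanSlope_le n₀_pos (c := 72 / 91) (by norm_num) (by norm_num)
  have hnonneg (j : ℕ) : 0 ≤ (1 - 1 / (2 * (j : ℝ) + 3)) * (72 / 91) ^ (2 * (j + 1)) :=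
    mul_nonneg (one_sub_one_div_mem_Icc j).1 (by positivity)
  have hzetaLower := le_sum_evenZeta_sub_one hnonneg
  have hzetaUpper := sum_evenZeta_sub_one_le hnonneg
  have hlog := log_163_div_19_bounds
  simp only [← mul_assoc] at hzetaLower hzetaUpper
  rw [cast_n₀] at hupper
  unfold artanhDefect at hlower hupper
  rw [le_div_iff₀ (by norm_num), div_le_iff₀ (by norm_num)]
  norm_num at hlower hupper hzetaLower hzetaUpper hlog ⊢
  constructor <;> linarith

lemma meanCotDefect_n₀_081_le : meanCotDefect n₀ (81 / 100) ≤ 1.080738 := by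
  have hupper := meanCotDefect_n₀_le (y := 81 / 100) (by norm_num) (by norm_num)
  have hlog := log_181_div_19_le
  unfold artanhDefect at hupper
  norm_num at hupper hlog ⊢
  linarith

lemma meanCotDefect_n₀_090_le : meanCotDefect n₀ (9 / 10) ≤ 1.6449 := by
  have hupper := meanCotDefect_n₀_le (y := 9 / 10) (by norm_num) (by norm_num)
  have hlog := log_19_le
  unfold artanhDefect at hupper
  norm_num at hupper hlog ⊢
  linarith

lemma meanCotDefect_n₀_065_le : meanCotDefect n₀ (65 / 100) ≤ 0.5737 := by
  have hupper := meanCotDefect_n₀_le (y := 65 / 100) (by norm_num) (by norm_num)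
  have hlog := log_33_div_7_le
  unfold artanhDefect at hupper
  norm_num at hupper hlog ⊢
  linarith

-- Absorbs the error in an approximate slope into the quadratic term.
lemma mul_le_sq_add {s u : ℝ} (hs : |s| ≤ 0.0004) : s * u ≤ 0.06 * u ^ 2 + 0.045 / 63015 := by
  have hsq : s ^ 2 ≤ 0.0004 ^ 2 := sq_le_sq' (abs_le.1 hs).1 (abs_le.1 hs).2
  nlinarith [sq_nonneg (0.12 * u - s)]

variable {y : ℝ} (hy0 : 0 < y)
include hy0

lemma quadratic_le_meanCotDefect_n₀ (hy1 : y < 1) :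
    1 - 2.94 / 63015 + 4.0824 * (y - 72 / 91) + 3.5 * (y - 72 / 91) ^ 2 ≤
      meanCotDefect n₀ y := by
  have hthree := le_meanCotDefect_of_slope n₀_pos (c := 72 / 91) (by norm_num) (by norm_num)
    hy0 hy1
  obtain ⟨hσ, hσ'⟩ := meanCotDefect_n₀_bounds
  obtain ⟨hs, hs'⟩ := meanSlope_n₀_bounds
  set D := meanSlope n₀ (72 / 91)
  set σ := meanCotDefect n₀ (72 / 91)
  set u := y - 72 / 91 with hu
  have hexpand : (D - σ) * (y / (72 / 91)) ^ 2 - (D - 2 * σ) * (y / (72 / 91)) =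
      σ + D / (72 / 91) * u + (D - σ) / (72 / 91) ^ 2 * u ^ 2 := by
    rw [show y = u + 72 / 91 by ring]
    ring
  have hquad : 3.56 * u ^ 2 ≤ (D - σ) / (72 / 91) ^ 2 * u ^ 2 := by
    gcongr
    rw [le_div_iff₀ (by norm_num)] at hs ⊢
    norm_num at hs hσ' ⊢
    linarith
  have hlin := mul_le_sq_add (s := 4.0824 - D / (72 / 91)) (u := u)
    (abs_le.2 ⟨by linarith, by linarith⟩)
  linarith

lemma meanCotDefect_n₀_le_quadratic {z q : ℝ} (hz : 72 / 91 < z) (hz1 : z < 1)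
    (hσz : meanCotDefect n₀ z ≤
      1 - 2.8885 / 63015 + 4.0820 * (z - 72 / 91) + q * (z - 72 / 91) ^ 2) (hyz : y ≤ z) :
    meanCotDefect n₀ y ≤
      1 + 0.31 / 63015 + 4.0824 * (y - 72 / 91) + (q + 0.06) * (y - 72 / 91) ^ 2 := by
  have hthree := meanCotDefect_remainder_mul_le n₀_pos (c := 72 / 91) (by norm_num)
    (by norm_num) hy0 hyz hz1
  obtain ⟨hσ, hσ'⟩ := meanCotDefect_n₀_bounds
  obtain ⟨hs, hs'⟩ := meanSlope_n₀_bounds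
  set D := meanSlope n₀ (72 / 91)
  set σ := meanCotDefect n₀ (72 / 91)
  set u := y - 72 / 91 with hu
  set w := z - 72 / 91 with hw
  have hw0 : 0 < w := sub_pos.2 hz
  have hrem : (meanCotDefect n₀ y - σ - D / (72 / 91) * u) * w ^ 2 ≤
      (meanCotDefect n₀ z - σ - D / (72 / 91) * w) * u ^ 2 := by
    rw [show y / (72 / 91) - 1 = u / (72 / 91) by ring,
      show z / (72 / 91) - 1 = w / (72 / 91) by ring] at hthree
    linarith
  have hσz' : meanCotDefect n₀ z - σ - D / (72 / 91) * w ≤ q * w ^ 2 := by nlinarith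
  have hquad : meanCotDefect n₀ y - σ - D / (72 / 91) * u ≤ q * u ^ 2 := by
    refine le_of_mul_le_mul_right (hrem.trans ?_) (show 0 < w ^ 2 by positivity)
    linarith [mul_le_mul_of_nonneg_right hσz' (sq_nonneg u)]
  have hlin := mul_le_sq_add (s := D / (72 / 91) - 4.0824) (u := u)
    (abs_le.2 ⟨by linarith, by linarith⟩)
  linarith

lemma meanCotDefect_n₀_le_of_le_081 (hy : y ≤ 81 / 100) :
    meanCotDefect n₀ y ≤
      1 + 0.31 / 63015 + 4.0824 * (y - 72 / 91) + 11.65 * (y - 72 / 91) ^ 2 := by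
  have hquad := meanCotDefect_n₀_le_quadratic hy0 (z := 81 / 100) (q := 11.59) (by norm_num)
    (by norm_num) (meanCotDefect_n₀_081_le.trans (by norm_num)) hy
  norm_num at hquad ⊢
  linarith

lemma meanCotDefect_n₀_le_of_le_090 (hy : y ≤ 9 / 10) :
    meanCotDefect n₀ y ≤
      1 + 0.31 / 63015 + 4.0824 * (y - 72 / 91) + 17.1 * (y - 72 / 91) ^ 2 := by
  have hquad := meanCotDefect_n₀_le_quadratic hy0 (z := 9 / 10) (q := 17.04) (by norm_num)
    (by norm_num) (meanCotDefect_n₀_090_le.trans (by norm_num)) hy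
  norm_num at hquad ⊢
  linarith

lemma meanCotDefect_n₀_le_of_le_065 (hy : y ≤ 65 / 100) :
    meanCotDefect n₀ y ≤ 1.358 * y ^ 2 := by
  have hsq := meanCotDefect_le_mul_sq (n := n₀) hy0 hy (by norm_num)
  rw [div_pow] at hsq
  norm_num at hsq
  nlinarith [meanCotDefect_n₀_065_le, sq_nonneg y]

lemma meanCotDefect_n₀_le_artanhDefect_add (hy1 : y < 1) :
    meanCotDefect n₀ y ≤
      artanhDefect y + 2 * y ^ 2 / (1 - y ^ 2) / 63015 + 0.4701 * y ^ 2 := by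
  have hle := meanCotDefect_n₀_le hy0 hy1
  have hpow {k : ℕ} (hk : 2 ≤ k) : y ^ k ≤ y ^ 2 := pow_le_pow_of_le_one hy0.le hy1.le hk
  have htail : 2 * 0.00025 * (1 / 13 + 1 / 63015) * y ^ 12 / (1 - y ^ 2 / 4) ≤
      0.0001 * y ^ 2 := by
    rw [div_le_iff₀ (by nlinarith)]
    nlinarith [hpow (show 2 ≤ 12 by norm_num), mul_nonneg (sq_nonneg y)
      (show 0 ≤ 1 - y ^ 2 by nlinarith), sq_nonneg y]
  linarith [hpow (show 2 ≤ 4 by norm_num), hpow (show 2 ≤ 6 by norm_num),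
    hpow (show 2 ≤ 8 by norm_num), hpow (show 2 ≤ 10 by norm_num), sq_nonneg y]

end Numerics

/-! ### The sine product on the major arc -/

section RescaledProd

lemma mul_logDeriv_two_mul_sin (c y : ℝ) :
    y * logDeriv (fun y => 2 * sin (π * (c * y))) y = 1 - cotDefect (c * y) := by
  have hderiv : HasDerivAt (fun y : ℝ => 2 * sin (π * (c * y)))
      (2 * (cos (π * (c * y)) * (π * (c * 1)))) y :=
    ((((hasDerivAt_id y).const_mul _).const_mul _).sin).const_mul 2
  rw [logDeriv_apply, hderiv.deriv, cotDefect]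
  field_simp
  ring

/-- The sine product in the variable `y = n θ / (2π)`, which runs over `[0, 1]` on the major arc. -/
noncomputable def rescaledProd (n : ℕ) (y : ℝ) : ℝ := sineProd n (2 * π * y / n)

lemma rescaledProd_eq_prod {n : ℕ} (hn : 0 < n) (y : ℝ) :
    rescaledProd n y = ∏ k ∈ range n, (2 * sin (π * (((k : ℝ) + 1) / n * y))) := by
  have hn' : (n : ℝ) ≠ 0 := by positivity
  unfold rescaledProd sineProd
  rw [show Icc 1 n = Ico 1 (n + 1) from rfl, prod_Ico_eq_prod_range, Nat.add_sub_cancel]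
  refine prod_congr rfl fun k _ => ?_
  congr 2
  push_cast
  field_simp
  ring

lemma contDiff_rescaledProd (n : ℕ) : ContDiff ℝ 1 (rescaledProd n) := by
  unfold rescaledProd sineProd
  exact contDiff_prod fun k _ => by fun_prop

@[fun_prop]
lemma continuous_rescaledProd (n : ℕ) : Continuous (rescaledProd n) :=
  (contDiff_rescaledProd n).continuous

@[fun_prop]
lemma continuous_deriv_rescaledProd (n : ℕ) : Continuous (deriv (rescaledProd n)) :=
  (contDiff_rescaledProd n).continuous_deriv le_rfl

lemma hasDerivAt_rescaledProd (n : ℕ) (y : ℝ) :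
    HasDerivAt (rescaledProd n) (deriv (rescaledProd n) y) y :=
  ((contDiff_rescaledProd n).differentiable one_ne_zero y).hasDerivAt

lemma sin_pi_mul_pos {n k : ℕ} (hk : k ∈ range n) {y : ℝ} (hy0 : 0 < y) (hy1 : y < 1) :
    0 < sin (π * (((k : ℝ) + 1) / n * y)) := by
  obtain ⟨hpos, hle⟩ := succ_div_mem_Ioc hk
  have hlt : ((k : ℝ) + 1) / n * y < 1 := by nlinarith
  exact sin_pos_of_pos_of_lt_pi (by positivity) (by nlinarith [pi_pos])

variable {n : ℕ} (hn : 0 < n)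
include hn

lemma rescaledProd_pos {y : ℝ} (hy0 : 0 < y) (hy1 : y < 1) : 0 < rescaledProd n y := by
  rw [rescaledProd_eq_prod hn]
  exact prod_pos fun k hk => mul_pos two_pos (sin_pi_mul_pos hk hy0 hy1)

lemma rescaledProd_zero : rescaledProd n 0 = 0 := by
  rw [rescaledProd_eq_prod hn]
  exact prod_eq_zero (mem_range.2 hn) (by simp)

lemma rescaledProd_one : rescaledProd n 1 = 0 := by
  have hlast : (((n - 1 : ℕ) : ℝ) + 1) / n * 1 = 1 := by
    rw [Nat.cast_pred hn, sub_add_cancel, mul_one, div_self (by positivity)]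
  rw [rescaledProd_eq_prod hn]
  exact prod_eq_zero (i := n - 1) (mem_range.2 (by lia)) (by rw [hlast]; simp)

lemma rescaledProd_nonneg {y : ℝ} (hy0 : 0 ≤ y) (hy1 : y ≤ 1) : 0 ≤ rescaledProd n y := by
  rcases hy0.eq_or_lt with rfl | hy0
  · rw [rescaledProd_zero hn]
  rcases hy1.eq_or_lt with rfl | hy1
  · rw [rescaledProd_one hn]
  exact (rescaledProd_pos hn hy0 hy1).le

theorem mul_deriv_rescaledProd {y : ℝ} (hy0 : 0 < y) (hy1 : y < 1) :
    y * deriv (rescaledProd n) y = n * rescaledProd n y * (1 - meanCotDefect n y) := by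
  have hn' : (n : ℝ) ≠ 0 := by positivity
  have hpos := rescaledProd_pos hn hy0 hy1
  have hlog : y * logDeriv (rescaledProd n) y = n * (1 - meanCotDefect n y) := by
    rw [funext (rescaledProd_eq_prod hn), logDeriv_prod
      (fun k hk => (mul_pos two_pos (sin_pi_mul_pos hk hy0 hy1)).ne') (fun k _ => by fun_prop),
      mul_sum, sum_congr rfl fun k _ => mul_logDeriv_two_mul_sin _ y, sum_sub_distrib,
      meanCotDefect, sum_const, card_range, nsmul_one, mul_sub, mul_one, one_div,
      mul_inv_cancel_left₀ hn']
  rw [logDeriv_apply] at hlog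
  field_simp at hlog
  linarith

-- The derivative of `y k E`, where `E = rescaledProd n`, is `E (n k (1 - σ) + k + y k')`, by the
-- differential equation for `E`.
theorem integral_rescaledProd_mul_nonneg {a b : ℝ} (ha : 0 ≤ a) (hab : a ≤ b) (hb : b ≤ 1)
    {k k' f : ℝ → ℝ} (hk : ∀ y, HasDerivAt k (k' y) y) (hk' : Continuous k') (hf : Continuous f)
    (hends : rescaledProd n a * (a * k a) ≤ rescaledProd n b * (b * k b))
    (hle : ∀ y ∈ Set.Ioo a b,
      n * k y * (1 - meanCotDefect n y) + (k y + y * k' y) ≤ n * f y) :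
    0 ≤ ∫ y in a..b, rescaledProd n y * f y := by
  have hkc : Continuous k := continuous_iff_continuousAt.2 fun y => (hk y).continuousAt
  have hderiv (y : ℝ) : HasDerivAt (fun y => rescaledProd n y * (y * k y))
      (deriv (rescaledProd n) y * (y * k y) + rescaledProd n y * (1 * k y + y * k' y)) y :=
    (hasDerivAt_rescaledProd n y).mul ((hasDerivAt_id y).mul (hk y))
  have hftc := intervalIntegral.integral_eq_sub_of_hasDerivAt (a := a) (b := b)
    (fun y _ => hderiv y) (Continuous.intervalIntegrable (by fun_prop) _ _)
  have hmono : ∫ y in a..b, (deriv (rescaledProd n) y * (y * k y) +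
      rescaledProd n y * (1 * k y + y * k' y)) ≤ ∫ y in a..b, n * (rescaledProd n y * f y) := by
    refine intervalIntegral.integral_mono_on_of_le_Ioo hab
      (Continuous.intervalIntegrable (by fun_prop) _ _)
      (Continuous.intervalIntegrable (by fun_prop) _ _) fun y hy => ?_
    have hy0 : 0 < y := ha.trans_lt hy.1
    have hy1 : y < 1 := hy.2.trans_le hb
    calc deriv (rescaledProd n) y * (y * k y) + rescaledProd n y * (1 * k y + y * k' y)
        = (y * deriv (rescaledProd n) y) * k y + rescaledProd n y * (k y + y * k' y) := by ring
      _ = rescaledProd n y * (n * k y * (1 - meanCotDefect n y) + (k y + y * k' y)) := by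
          rw [mul_deriv_rescaledProd hn hy0 hy1]
          ring
      _ ≤ rescaledProd n y * (n * f y) :=
          mul_le_mul_of_nonneg_left (hle y hy) (rescaledProd_pos hn hy0 hy1).le
      _ = n * (rescaledProd n y * f y) := by ring
  rw [hftc, intervalIntegral.integral_const_mul] at hmono
  exact nonneg_of_mul_nonneg_right (by linarith) (Nat.cast_pos.2 hn)

section Comparison

variable {p p' : ℝ → ℝ} (hp : ∀ y, HasDerivAt p (p' y) y)
include hp

lemma mul_deriv_rescaledProd_mul_exp {y : ℝ} (hy0 : 0 < y) (hy1 : y < 1) :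
    y * deriv (fun y => rescaledProd n y * exp (p y)) y =
      rescaledProd n y * exp (p y) * (n * (1 - meanCotDefect n y) + y * p' y) := by
  rw [((hasDerivAt_rescaledProd n y).fun_mul (hp y).exp).deriv, mul_add, ← mul_assoc,
    mul_deriv_rescaledProd hn hy0 hy1]
  ring

variable {a b : ℝ} (ha : 0 ≤ a) (hab : a ≤ b) (hb : b ≤ 1)
include ha hab hb

lemma rescaledProd_mul_exp_le
    (hnonneg : ∀ y ∈ Set.Ioo a b, 0 ≤ n * (1 - meanCotDefect n y) + y * p' y) :
    rescaledProd n a * exp (p a) ≤ rescaledProd n b * exp (p b) := by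
  have hdiff (y : ℝ) := ((hasDerivAt_rescaledProd n y).fun_mul (hp y).exp).differentiableAt
  refine monotoneOn_of_deriv_nonneg (convex_Icc a b)
    (fun y _ => (hdiff y).continuousAt.continuousWithinAt)
    (fun y _ => (hdiff y).differentiableWithinAt) (fun y hy => ?_)
    (Set.left_mem_Icc.2 hab) (Set.right_mem_Icc.2 hab) hab
  rw [interior_Icc] at hy
  have hy0 : 0 < y := ha.trans_lt hy.1
  have hy1 : y < 1 := hy.2.trans_le hb
  refine nonneg_of_mul_nonneg_right ?_ hy0
  rw [mul_deriv_rescaledProd_mul_exp hn hp hy0 hy1]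
  exact mul_nonneg (mul_nonneg (rescaledProd_pos hn hy0 hy1).le (exp_nonneg _)) (hnonneg y hy)

lemma le_rescaledProd_mul_exp
    (hnonpos : ∀ y ∈ Set.Ioo a b, n * (1 - meanCotDefect n y) + y * p' y ≤ 0) :
    rescaledProd n b * exp (p b) ≤ rescaledProd n a * exp (p a) := by
  have hdiff (y : ℝ) := ((hasDerivAt_rescaledProd n y).fun_mul (hp y).exp).differentiableAt
  refine antitoneOn_of_deriv_nonpos (convex_Icc a b)
    (fun y _ => (hdiff y).continuousAt.continuousWithinAt)
    (fun y _ => (hdiff y).differentiableWithinAt) (fun y hy => ?_)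
    (Set.left_mem_Icc.2 hab) (Set.right_mem_Icc.2 hab) hab
  rw [interior_Icc] at hy
  have hy0 : 0 < y := ha.trans_lt hy.1
  have hy1 : y < 1 := hy.2.trans_le hb
  refine nonpos_of_mul_nonpos_right ?_ hy0
  rw [mul_deriv_rescaledProd_mul_exp hn hp hy0 hy1]
  exact mul_nonpos_of_nonneg_of_nonpos
    (mul_nonneg (rescaledProd_pos hn hy0 hy1).le (exp_nonneg _)) (hnonpos y hy)

end Comparison

end RescaledProd

/-! ### First-order conditions at the frequencies `19911 ± 1 / 2` -/

section StepWeight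

/-- The factor `sin (π y / 63015)` in the difference
`sin ((d + 1) θ) - sin (d θ) = 2 sin (θ / 2) cos ((d + 1 / 2) θ)`, where `θ = 2 π y / 63015`. -/
noncomputable def stepWeight (y : ℝ) : ℝ := sin (π * (y / 63015))

lemma hasDerivAt_stepWeight (y : ℝ) :
    HasDerivAt stepWeight (cos (π * (y / 63015)) * (π * (1 / 63015))) y :=
  (((hasDerivAt_id y).div_const _).const_mul _).sin

@[fun_prop]
lemma continuous_stepWeight : Continuous stepWeight := by
  unfold stepWeight
  fun_prop

variable {y : ℝ} (hy0 : 0 < y) (hy1 : y < 1)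
include hy0 hy1

lemma pi_mul_div_mem_Ioo : π * (y / 63015) ∈ Set.Ioo 0 (π / 2) :=
  ⟨by positivity, by nlinarith [pi_pos]⟩

lemma stepWeight_nonneg : 0 ≤ stepWeight y := by
  obtain ⟨hpos, hlt⟩ := pi_mul_div_mem_Ioo hy0 hy1
  exact sin_nonneg_of_nonneg_of_le_pi hpos.le (by linarith)

lemma mul_deriv_stepWeight_nonneg : 0 ≤ y * (cos (π * (y / 63015)) * (π * (1 / 63015))) := by
  obtain ⟨hpos, hlt⟩ := pi_mul_div_mem_Ioo hy0 hy1
  have hcos := cos_nonneg_of_mem_Icc ⟨by linarith, hlt.le⟩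
  positivity

lemma mul_deriv_stepWeight_le :
    y * (cos (π * (y / 63015)) * (π * (1 / 63015))) ≤ stepWeight y := by
  obtain ⟨hpos, hlt⟩ := pi_mul_div_mem_Ioo hy0 hy1
  have htan := le_tan hpos.le hlt
  rw [tan_eq_sin_div_cos, le_div_iff₀ (cos_pos_of_mem_Ioo ⟨by linarith, hlt⟩)] at htan
  exact htan.trans_eq' (by ring)

end StepWeight

section CosineBounds

variable {u : ℝ}

lemma le_cos_39821_of_nonpos (hu : u ≤ 0) :
    0.00003862 - 1.98526 * u - (0.000039 - 1.98529 * u) ^ 3 / 6 ≤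
      cos (π * (39821 / 63015) * (u + 72 / 91)) := by
  set z := π / 2 - π * (39821 / 63015) * (u + 72 / 91) with hz
  have hzu : z = π * (70.5 / 5734365) - π * (39821 / 63015) * u := by rw [hz]; ring
  have hz0 : 0 ≤ z := by rw [hzu]; nlinarith [pi_pos]
  have hlower : 0.00003862 - 1.98526 * u ≤ z := by rw [hzu]; nlinarith [pi_gt_d6, pi_lt_d6]
  have hupper : z ≤ 0.000039 - 1.98529 * u := by rw [hzu]; nlinarith [pi_gt_d6, pi_lt_d6]
  rw [← sin_pi_div_two_sub, ← hz]
  linarith [sin_ge_sub_cube hz0, pow_le_pow_left₀ hz0 hupper 3]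

lemma le_cos_39821_of_nonneg (hu : 0 ≤ u) :
    0.0000386199 - 1.98529 * u ≤ cos (π * (39821 / 63015) * (u + 72 / 91)) := by
  set z := π / 2 - π * (39821 / 63015) * (u + 72 / 91) with hz
  have hzu : z = π * (70.5 / 5734365) - π * (39821 / 63015) * u := by rw [hz]; ring
  have hlower : 0.00003862 - 1.98529 * u ≤ z := by rw [hzu]; nlinarith [pi_gt_d6, pi_lt_d6]
  rw [← sin_pi_div_two_sub, ← hz]
  rcases le_total z 0 with hz0 | hz0
  · linarith [le_sin hz0]
  · have hupper : z ≤ 0.0001 := by rw [hzu]; nlinarith [pi_gt_d6, pi_lt_d6]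
    linarith [sin_ge_sub_cube hz0, pow_le_pow_left₀ hz0 hupper 3]

lemma sin_le_sub_cube_of_nonpos {z : ℝ} (hz : z ≤ 0) : sin z ≤ z + (-z) ^ 3 / 6 := by
  have hneg := sin_ge_sub_cube (neg_nonneg.2 hz)
  rw [sin_neg] at hneg
  linarith

lemma cos_39823_le_of_le {y : ℝ} (hy0 : 0 ≤ y) (hy : y ≤ 0.65) :
    cos (π * (39823 / 63015) * y) ≤ 1.5708 - 1.9853 * y := by
  rw [← sin_pi_div_two_sub]
  refine (sin_le ?_).trans ?_ <;> nlinarith [pi_gt_d6, pi_lt_d6]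

lemma cos_39823_le_of_le_neg (hu : u ≤ -0.00003) :
    cos (π * (39823 / 63015) * (u + 72 / 91)) ≤ -0.00004026 - 1.98537 * u := by
  rw [← sin_pi_div_two_sub, show π / 2 - π * (39823 / 63015) * (u + 72 / 91) =
    -(π * (73.5 / 5734365)) - π * (39823 / 63015) * u by ring]
  refine (sin_le ?_).trans ?_ <;> nlinarith [pi_gt_d6, pi_lt_d6]

lemma cos_39823_le_of_neg_le (hu : -0.00003 ≤ u) :
    cos (π * (39823 / 63015) * (u + 72 / 91)) ≤
      -0.000040259 - 1.98535 * u + (0.0002 + 1.98538 * u) ^ 3 / 6 := by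
  set z := π / 2 - π * (39823 / 63015) * (u + 72 / 91) with hz
  have hzu : z = -(π * (73.5 / 5734365)) - π * (39823 / 63015) * u := by rw [hz]; ring
  have hlower : -z ≤ 0.0002 + 1.98538 * u := by rw [hzu]; nlinarith [pi_gt_d6, pi_lt_d6]
  have hupper : z ≤ -0.000040259 - 1.98535 * u := by rw [hzu]; nlinarith [pi_gt_d6, pi_lt_d6]
  rw [← sin_pi_div_two_sub, ← hz]
  rcases le_total z 0 with hz0 | hz0
  · linarith [sin_le_sub_cube_of_nonpos hz0, pow_le_pow_left₀ (neg_nonneg.2 hz0) hlower 3]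
  · have hcube : 0 ≤ (0.0002 + 1.98538 * u) ^ 3 := pow_nonneg (by linarith) 3
    linarith [sin_le hz0]

lemma cos_39823_le_of_ge {y : ℝ} (hy : 0.9 ≤ y) (hy1 : y ≤ 1) :
    cos (π * (39823 / 63015) * y) ≤ -0.4145 + 1.9854 * (1 - y) + 0.415 ^ 3 / 6 := by
  set z := π / 2 - π * (39823 / 63015) * y with hz
  have hz0 : z ≤ 0 := by nlinarith [pi_gt_d6, pi_lt_d6]
  have hlower : -z ≤ 0.415 := by nlinarith [pi_gt_d6, pi_lt_d6]
  have hupper : z ≤ -0.4145 + 1.9854 * (1 - y) := by nlinarith [pi_gt_d6, pi_lt_d6]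
  rw [← sin_pi_div_two_sub, ← hz]
  linarith [sin_le_sub_cube_of_nonpos hz0, pow_le_pow_left₀ (neg_nonneg.2 hz0) hlower 3]

end CosineBounds

section FirstOrder

lemma stein_le_cos_39821 {y : ℝ} (hy0 : 0 < y) (hy1 : y < 1) :
    63015 * (0.4863 - 0.3 * (y - 72 / 91)) * (1 - meanCotDefect n₀ y) +
      (2 * (0.4863 - 0.3 * (y - 72 / 91)) + y * (-0.3)) ≤
        63015 * (cos (π * (39821 / 63015) * y) - 0.1 / 63015) := by
  have hσ := quadratic_le_meanCotDefect_n₀ hy0 hy1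
  obtain ⟨u, rfl⟩ : ∃ u, y = u + 72 / 91 := ⟨y - 72 / 91, by ring⟩
  rw [add_sub_cancel_right] at hσ ⊢
  have hmul := mul_le_mul_of_nonneg_left hσ (show 0 ≤ 0.4863 - 0.3 * u by linarith)
  rcases le_total u 0 with hu | hu
  · have hcos := le_cos_39821_of_nonpos hu
    have hcube : 0 ≤ u ^ 2 * (u + 72 / 91) := by positivity
    nlinarith [mul_nonneg (sq_nonneg u) (neg_nonneg.2 hu), sq_nonneg (u + 0.0001)]
  · have hcos := le_cos_39821_of_nonneg hu
    have hcube : 0 ≤ u ^ 2 * (19 / 91 - u) := mul_nonneg (sq_nonneg u) (by linarith)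
    nlinarith [sq_nonneg (u - 0.0001), mul_nonneg (sq_nonneg u) hu]

theorem integral_mul_cos_39821_nonneg :
    0 ≤ ∫ y in (0 : ℝ)..1, rescaledProd n₀ y *
      (stepWeight y * (cos (π * (39821 / 63015) * y) - 0.1 / 63015)) := by
  refine integral_rescaledProd_mul_nonneg n₀_pos le_rfl zero_le_one le_rfl
    (k := fun y => (0.4863 - 0.3 * (y - 72 / 91)) * stepWeight y)
    (k' := fun y => -(0.3 * 1) * stepWeight y +
      (0.4863 - 0.3 * (y - 72 / 91)) * (cos (π * (y / 63015)) * (π * (1 / 63015))))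
    (fun y => ((((hasDerivAt_id y).sub_const _).const_mul _).const_sub _).mul
      (hasDerivAt_stepWeight y)) (by fun_prop) (by fun_prop) ?_ fun y hy => ?_
  · rw [rescaledProd_zero n₀_pos, rescaledProd_one n₀_pos]
    simp
  · have hmul := mul_le_mul_of_nonneg_right (stein_le_cos_39821 hy.1 hy.2)
      (stepWeight_nonneg hy.1 hy.2)
    have hderiv := mul_le_mul_of_nonneg_left (mul_deriv_stepWeight_le hy.1 hy.2)
      (show 0 ≤ 0.4863 - 0.3 * (y - 72 / 91) by linarith [hy.2])
    rw [cast_n₀]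
    linarith

lemma one_sub_mul_log_le {y : ℝ} (hy0 : 0 ≤ y) (hy1 : y < 1) :
    (1 - y) * log ((1 + y) / (1 - y)) ≤ 1 / 8 + 1.7727 * (1 - y) := by
  obtain ⟨t, rfl⟩ : ∃ t, y = 1 - t := ⟨1 - y, by ring⟩
  rw [sub_sub_cancel]
  have ht : 0 < t := by linarith
  have hlog : log ((1 + (1 - t)) / t) ≤ 4 * log 2 + (1 / (8 * t) - 1) := by
    calc log ((1 + (1 - t)) / t) ≤ log (2 ^ 4 * (1 / (8 * t))) := by
          apply log_le_log (div_pos (by linarith) ht)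
          rw [div_le_iff₀ ht]
          field_simp
          linarith
      _ = 4 * log 2 + log (1 / (8 * t)) := by
          rw [log_mul (by norm_num) (by positivity), log_pow]
          norm_num
      _ ≤ _ := by linarith [log_le_sub_one_of_pos (show 0 < 1 / (8 * t) by positivity)]
  calc t * log ((1 + (1 - t)) / t) ≤ t * (4 * log 2 + (1 / (8 * t) - 1)) := by gcongr
    _ = 1 / 8 + t * (4 * log 2 - 1) := by field_simp; ring
    _ ≤ 1 / 8 + 1.7727 * t := by nlinarith [log_two_lt_d9]

lemma one_sub_mul_meanCotDefect_n₀_le {y : ℝ} (hy : 0.9 ≤ y) (hy1 : y < 1) :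
    (1 - y) * meanCotDefect n₀ y ≤
      (1 / 8 + 1.7727 * (1 - y)) / 0.9 - 2 * (1 - y) + 2 / 63015 + 0.4701 * (1 - y) := by
  have hy0 : 0 < y := by linarith
  have ht : 0 < 1 - y := sub_pos.2 hy1
  have hlog : (1 - y) * log ((1 + y) / (1 - y)) / y ≤ (1 / 8 + 1.7727 * (1 - y)) / 0.9 :=
    div_le_div₀ (by positivity) (one_sub_mul_log_le hy0.le hy1) (by norm_num) hy
  have hpole : (1 - y) * (2 * y ^ 2 / (1 - y ^ 2)) ≤ 2 := by
    rw [show 1 - y ^ 2 = (1 - y) * (1 + y) by ring, ← mul_div_assoc, div_le_iff₀ (by positivity)]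
    nlinarith [mul_nonneg ht.le (show 0 ≤ 1 + y - y ^ 2 by nlinarith)]
  have hsq : (1 - y) * y ^ 2 ≤ 1 - y := mul_le_of_le_one_right ht.le (by nlinarith)
  calc (1 - y) * meanCotDefect n₀ y ≤
        (1 - y) * (artanhDefect y + 2 * y ^ 2 / (1 - y ^ 2) / 63015 + 0.4701 * y ^ 2) := by
        gcongr
        exact meanCotDefect_n₀_le_artanhDefect_add hy0 hy1
    _ = (1 - y) * log ((1 + y) / (1 - y)) / y - 2 * (1 - y) +
          (1 - y) * (2 * y ^ 2 / (1 - y ^ 2)) / 63015 + 0.4701 * ((1 - y) * y ^ 2) := by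
        unfold artanhDefect
        ring
    _ ≤ _ := by linarith

lemma cos_39823_le_stein_of_le_065 {y : ℝ} (hy0 : 0 < y) (hy : y ≤ 0.65) :
    63015 * (cos (π * (39823 / 63015) * y) + 0.1 / 63015) ≤
      63015 * (2.3294 * (1 - y)) * (1 - meanCotDefect n₀ y) +
        (2.3294 * (1 - y) + y * (-2.3294)) := by
  have hσ := mul_le_mul_of_nonneg_left
    (meanCotDefect_n₀_le_of_le_065 hy0 (by linarith)) (show 0 ≤ 1 - y by linarith)
  have hcos := cos_39823_le_of_le hy0.le hy
  nlinarith [mul_nonneg hy0.le (sq_nonneg (y - 0.6)), sq_nonneg (y - 0.6),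
    mul_nonneg (mul_nonneg hy0.le (sub_nonneg.2 hy)) hy0.le]

lemma cos_39823_le_stein_of_le_neg {u : ℝ} (hu : 0.65 ≤ u + 72 / 91) (hu1 : u ≤ -0.00003) :
    63015 * (cos (π * (39823 / 63015) * (u + 72 / 91)) + 0.1 / 63015) ≤
      63015 * (2.3294 * (1 - (u + 72 / 91))) * (1 - meanCotDefect n₀ (u + 72 / 91)) +
        (2.3294 * (1 - (u + 72 / 91)) + (u + 72 / 91) * (-2.3294)) := by
  have hσ := mul_le_mul_of_nonneg_left
    (meanCotDefect_n₀_le_of_le_081 (y := u + 72 / 91) (by linarith) (by linarith))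
    (show 0 ≤ 1 - (u + 72 / 91) by linarith)
  have hcos := cos_39823_le_of_le_neg hu1
  rw [add_sub_cancel_right] at hσ
  nlinarith [mul_nonneg (sq_nonneg u) (sub_nonneg.2 hu), sq_nonneg u]

lemma cos_39823_le_stein_of_neg_le {u : ℝ} (hu : -0.00003 ≤ u) (hu1 : u + 72 / 91 ≤ 0.9) :
    63015 * (cos (π * (39823 / 63015) * (u + 72 / 91)) + 0.1 / 63015) ≤
      63015 * (2.3294 * (1 - (u + 72 / 91))) * (1 - meanCotDefect n₀ (u + 72 / 91)) +
        (2.3294 * (1 - (u + 72 / 91)) + (u + 72 / 91) * (-2.3294)) := by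
  have hσ := mul_le_mul_of_nonneg_left
    (meanCotDefect_n₀_le_of_le_090 (y := u + 72 / 91) (by linarith) (by linarith))
    (show 0 ≤ 1 - (u + 72 / 91) by linarith)
  have hcos := cos_39823_le_of_neg_le hu
  rw [add_sub_cancel_right] at hσ
  obtain ⟨v, rfl⟩ : ∃ v, u = v - 0.00003 := ⟨u + 0.00003, by ring⟩
  have hv : 0 ≤ v := by linarith
  nlinarith [sq_nonneg (v - 0.0001), mul_nonneg hv (sq_nonneg v), sq_nonneg v]

lemma cos_39823_le_stein_of_ge_090 {y : ℝ} (hy : 0.9 ≤ y) (hy1 : y < 1) :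
    63015 * (cos (π * (39823 / 63015) * y) + 0.1 / 63015) ≤
      63015 * (2.3294 * (1 - y)) * (1 - meanCotDefect n₀ y) +
        (2.3294 * (1 - y) + y * (-2.3294)) := by
  have hσ := one_sub_mul_meanCotDefect_n₀_le hy hy1
  have hcos := cos_39823_le_of_ge hy hy1.le
  norm_num at hσ hcos hy ⊢
  linarith

lemma cos_39823_le_stein {y : ℝ} (hy0 : 0 < y) (hy1 : y < 1) :
    63015 * (cos (π * (39823 / 63015) * y) + 0.1 / 63015) ≤
      63015 * (2.3294 * (1 - y)) * (1 - meanCotDefect n₀ y) +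
        (2.3294 * (1 - y) + y * (-2.3294)) := by
  obtain ⟨u, hu⟩ : ∃ u, y = u + 72 / 91 := ⟨y - 72 / 91, by ring⟩
  rcases le_total y 0.65 with hy | hy
  · exact cos_39823_le_stein_of_le_065 hy0 hy
  rcases le_total y 0.9 with hy9 | hy9
  · subst hu
    rcases le_total u (-0.00003) with hu | hu
    · exact cos_39823_le_stein_of_le_neg hy hu
    · exact cos_39823_le_stein_of_neg_le hu hy9
  · exact cos_39823_le_stein_of_ge_090 hy9 hy1

theorem integral_mul_neg_cos_39823_nonneg :
    0 ≤ ∫ y in (0 : ℝ)..1, rescaledProd n₀ y *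
      (stepWeight y * (-cos (π * (39823 / 63015) * y) - 0.1 / 63015)) := by
  refine integral_rescaledProd_mul_nonneg n₀_pos le_rfl zero_le_one le_rfl
    (k := fun y => -(2.3294 * (1 - y)) * stepWeight y)
    (k' := fun y => -(2.3294 * -1) * stepWeight y +
      -(2.3294 * (1 - y)) * (cos (π * (y / 63015)) * (π * (1 / 63015))))
    (fun y => ((((hasDerivAt_id y).const_sub _).const_mul _).neg).mul (hasDerivAt_stepWeight y))
    (by fun_prop) (by fun_prop) ?_ fun y hy => ?_
  · rw [rescaledProd_zero n₀_pos, rescaledProd_one n₀_pos]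
    simp
  · have hmul := mul_le_mul_of_nonneg_right (cos_39823_le_stein hy.1 hy.2)
      (stepWeight_nonneg hy.1 hy.2)
    have hderiv := mul_nonneg (show 0 ≤ 2.3294 * (1 - y) by linarith [hy.2])
      (mul_deriv_stepWeight_nonneg hy.1 hy.2)
    rw [cast_n₀]
    linarith

end FirstOrder

/-! ### The second moment about the peak -/

section SecondMoment

/-- The total mass of the rescaled product on `[0, 1]`, the normalization for its moments. -/
noncomputable def rescaledMass (n : ℕ) : ℝ := ∫ y in (0 : ℝ)..1, rescaledProd n y

lemma rescaledMass_nonneg {n : ℕ} (hn : 0 < n) : 0 ≤ rescaledMass n :=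
  intervalIntegral.integral_nonneg zero_le_one fun _ hy => rescaledProd_nonneg hn hy.1 hy.2

lemma integral_second_moment_right_nonneg :
    0 ≤ ∫ y in (72 / 91 : ℝ)..1, rescaledProd n₀ y * (0.21 / 63015 - (y - 72 / 91) ^ 2) := by
  refine integral_rescaledProd_mul_nonneg n₀_pos (by norm_num) (by norm_num) le_rfl
    (k := fun y => 0.25 * (y - 72 / 91)) (k' := fun _ => 0.25 * 1)
    (fun y => ((hasDerivAt_id y).sub_const _).const_mul _) (by fun_prop) (by fun_prop) ?_
    fun y hy => ?_
  · rw [rescaledProd_one n₀_pos]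
    simp
  · obtain ⟨u, rfl⟩ : ∃ u, y = u + 72 / 91 := ⟨y - 72 / 91, by ring⟩
    have hu : 0 ≤ u := by linarith [hy.1]
    have hσ := mul_le_mul_of_nonneg_left
      (quadratic_le_meanCotDefect_n₀ ((by norm_num : (0 : ℝ) < 72 / 91).trans hy.1) hy.2) hu
    rw [add_sub_cancel_right] at hσ ⊢
    rw [cast_n₀]
    nlinarith [sq_nonneg (u - 0.0005), mul_nonneg (sq_nonneg u) hu]

variable {v : ℝ}

lemma second_moment_le_of_ge (hv : 0.142 ≤ v) (hv1 : v < 72 / 91) :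
    63015 * (v ^ 2 - 0.21 / 63015) - (0.25 * v + 2 * v ^ 2) + (72 / 91 - v) * (0.25 + 4 * v) ≤
      63015 * (0.25 * v + 2 * v ^ 2) * (1 - meanCotDefect n₀ (72 / 91 - v)) := by
  have hv0 : 0 ≤ v := by linarith
  have hb : 0 ≤ v - 0.14 := by linarith
  have hy : 0 < 72 / 91 - v := sub_pos.2 hv1
  have hσ := mul_le_mul_of_nonneg_left (meanCotDefect_n₀_le_of_le_065 hy (by linarith))
    (show 0 ≤ 0.25 * v + 2 * v ^ 2 by positivity)
  have hfactor : v + 0.05 ≤ (0.25 + 2 * v) * (1 - 1.358 * (72 / 91 - v) ^ 2) := by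
    nlinarith [mul_nonneg hb hy.le, mul_nonneg (mul_nonneg hb hy.le) hb]
  have hmul := mul_le_mul_of_nonneg_left hfactor hv0
  nlinarith

lemma second_moment_le_of_le (hv0 : 0 ≤ v) (hv : v ≤ 0.142) :
    63015 * (v ^ 2 - 0.21 / 63015) - (0.25 * v + 2 * v ^ 2) + (72 / 91 - v) * (0.25 + 4 * v) ≤
      63015 * (0.25 * v + 2 * v ^ 2) * (1 - meanCotDefect n₀ (72 / 91 - v)) := by
  have hσ := mul_le_mul_of_nonneg_left
    (meanCotDefect_n₀_le_of_le_081 (y := 72 / 91 - v) (by linarith) (by linarith))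
    (show 0 ≤ 0.25 * v + 2 * v ^ 2 by positivity)
  have hb : 0 ≤ 0.15 - v := by linarith
  rw [sub_sub_cancel_left] at hσ
  nlinarith [sq_nonneg (v - 0.0012), mul_nonneg (mul_nonneg (sq_nonneg v) hv0) hb,
    mul_nonneg (sq_nonneg v) hv0, mul_nonneg hv0 hb]

lemma integral_second_moment_left_nonneg :
    0 ≤ ∫ y in (0 : ℝ)..(72 / 91), rescaledProd n₀ y * (0.21 / 63015 - (y - 72 / 91) ^ 2) := by
  refine integral_rescaledProd_mul_nonneg n₀_pos le_rfl (by norm_num) (by norm_num)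
    (k := fun y => 0.25 * (y - 72 / 91) - 2 * (y - 72 / 91) ^ 2)
    (k' := fun y => 0.25 * 1 - 2 * ((2 : ℕ) * (y - 72 / 91) ^ 1 * 1))
    (fun y => ?_) (by fun_prop) (by fun_prop) ?_ fun y hy => ?_
  · have hderiv := (hasDerivAt_id y).sub_const (72 / 91 : ℝ)
    exact (hderiv.const_mul _).sub ((hderiv.pow 2).const_mul _)
  · rw [rescaledProd_zero n₀_pos]
    simp
  · obtain ⟨v, rfl⟩ : ∃ v, y = 72 / 91 - v := ⟨72 / 91 - y, by ring⟩
    have hmoment : 63015 * (v ^ 2 - 0.21 / 63015) - (0.25 * v + 2 * v ^ 2) +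
        (72 / 91 - v) * (0.25 + 4 * v) ≤
          63015 * (0.25 * v + 2 * v ^ 2) * (1 - meanCotDefect n₀ (72 / 91 - v)) := by
      rcases le_total v 0.142 with hv | hv
      · exact second_moment_le_of_le (by linarith [hy.2]) hv
      · exact second_moment_le_of_ge hv (by linarith [hy.1])
    rw [sub_sub_cancel_left, cast_n₀]
    push_cast
    linarith

theorem integral_mul_sq_le :
    ∫ y in (0 : ℝ)..1, rescaledProd n₀ y * (y - 72 / 91) ^ 2 ≤
      0.21 / 63015 * rescaledMass n₀ := by
  have hnonneg := add_nonneg integral_second_moment_left_nonneg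
    integral_second_moment_right_nonneg
  rw [intervalIntegral.integral_add_adjacent_intervals
    (Continuous.intervalIntegrable (by fun_prop) _ _)
    (Continuous.intervalIntegrable (by fun_prop) _ _)] at hnonneg
  simp only [mul_sub, mul_comm (rescaledProd n₀ _) (0.21 / 63015)] at hnonneg
  rw [intervalIntegral.integral_sub (Continuous.intervalIntegrable (by fun_prop) _ _)
    (Continuous.intervalIntegrable (by fun_prop) _ _),
    intervalIntegral.integral_const_mul] at hnonneg
  exact sub_nonneg.1 hnonneg

lemma one_sub_sq_le_sin_39822 (y : ℝ) :
    1 - 0.0005 / 63015 - 1.972 * (y - 72 / 91) ^ 2 ≤ sin (π * (39822 / 63015) * y) := by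
  obtain ⟨u, rfl⟩ : ∃ u, y = u + 72 / 91 := ⟨y - 72 / 91, by ring⟩
  rw [add_sub_cancel_right, ← cos_pi_div_two_sub]
  refine one_sub_sq_div_two_le_cos.trans' ?_
  rw [show π / 2 - π * (39822 / 63015) * (u + 72 / 91) =
    -π * (1.5 / 5734365 + 39822 / 63015 * u) by ring, mul_pow, neg_sq]
  have hpi : π ^ 2 ≤ 3.141593 ^ 2 := pow_le_pow_left₀ pi_pos.le pi_lt_d6.le 2
  have hmul := mul_le_mul_of_nonneg_right hpi (sq_nonneg (1.5 / 5734365 + 39822 / 63015 * u))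
  nlinarith [sq_nonneg (u - 0.005), sq_nonneg (u - 0.001), sq_nonneg u]

end SecondMoment

/-! ### The shape of the peak -/

section Peak

variable {y : ℝ}

lemma le_one_sub_meanCotDefect_of_le (hy0 : 0 < y) (hy : y ≤ 72 / 91) :
    -0.31 + 6301.5 * (72 / 91 - y) ≤ 63015 * (1 - meanCotDefect n₀ y) := by
  obtain ⟨v, rfl⟩ : ∃ v, y = 72 / 91 - v := ⟨72 / 91 - y, by ring⟩
  have hv0 : 0 ≤ v := by linarith
  rcases le_total v 0.142 with hv | hv
  · have hσ := meanCotDefect_n₀_le_of_le_081 (y := 72 / 91 - v) hy0 (by linarith)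
    rw [sub_sub_cancel_left] at hσ
    nlinarith [mul_nonneg hv0 (sub_nonneg.2 hv)]
  · have hσ := meanCotDefect_n₀_le_of_le_065 (y := 72 / 91 - v) hy0 (by linarith)
    have hsq : (72 / 91 - v) ^ 2 ≤ 0.65 ^ 2 := pow_le_pow_left₀ hy0.le (by linarith) 2
    linarith

lemma one_sub_meanCotDefect_le_of_ge (hy : 72 / 91 ≤ y) (hy1 : y < 1) :
    63015 * (1 - meanCotDefect n₀ y) ≤ 2.94 - 252060 * (y - 72 / 91) := by
  have hσ := quadratic_le_meanCotDefect_n₀ (y := y) (by linarith) hy1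
  nlinarith [sq_nonneg (y - 72 / 91)]

lemma rescaledProd_le_mul_exp_of_le (hy0 : 0 ≤ y) (hy : y ≤ 72 / 91) :
    rescaledProd n₀ y * exp (0.5 * (y - 72 / 91) + 3000 * (y - 72 / 91) ^ 2) ≤
      rescaledProd n₀ (72 / 91) := by
  have hmono := rescaledProd_mul_exp_le n₀_pos
    (p := fun x => 0.5 * (x - 72 / 91) + 3000 * (x - 72 / 91) ^ 2)
    (p' := fun x => 0.5 * 1 + 3000 * ((2 : ℕ) * (x - 72 / 91) ^ 1 * 1))
    (fun x => (((hasDerivAt_id x).sub_const _).const_mul _).add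
      ((((hasDerivAt_id x).sub_const _).pow 2).const_mul _)) hy0 hy (by norm_num)
    fun x hx => ?_
  · simpa using hmono
  · have hσ := le_one_sub_meanCotDefect_of_le (hy0.trans_lt hx.1) hx.2.le
    rw [cast_n₀]
    nlinarith [hx.2, sq_nonneg (x - 72 / 91)]

lemma rescaledProd_le_mul_exp_of_ge (hy : 72 / 91 ≤ y) (hy1 : y ≤ 1) :
    rescaledProd n₀ y * exp (-4 * (y - 72 / 91) + 100000 * (y - 72 / 91) ^ 2) ≤
      rescaledProd n₀ (72 / 91) := by
  have hanti := le_rescaledProd_mul_exp n₀_pos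
    (p := fun x => -4 * (x - 72 / 91) + 100000 * (x - 72 / 91) ^ 2)
    (p' := fun x => -4 * 1 + 100000 * ((2 : ℕ) * (x - 72 / 91) ^ 1 * 1))
    (fun x => (((hasDerivAt_id x).sub_const _).const_mul _).add
      ((((hasDerivAt_id x).sub_const _).pow 2).const_mul _)) (by norm_num) hy hy1
    fun x hx => ?_
  · simpa using hanti
  · have hσ := one_sub_meanCotDefect_le_of_ge hx.1.le (hx.2.trans_le hy1)
    have hx1 : 0 ≤ 1 - x := by linarith [hx.2]
    rw [cast_n₀]
    nlinarith [hx.1, mul_nonneg (sub_nonneg.2 hx.1.le) hx1]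

-- The location of the peak is known only up to `O(1 / n)`, hence the factor `1.01`.
lemma rescaledProd_le_peak (hy0 : 0 ≤ y) (hy1 : y ≤ 1) :
    rescaledProd n₀ y ≤ 1.01 * rescaledProd n₀ (72 / 91) := by
  obtain ⟨x, hx, hle⟩ : ∃ x : ℝ, -0.005 ≤ x ∧
      rescaledProd n₀ y * exp x ≤ rescaledProd n₀ (72 / 91) := by
    rcases le_total y (72 / 91) with hy | hy
    · exact ⟨_, by nlinarith [sq_nonneg (y - 72 / 91 + 1 / 12000)],
        rescaledProd_le_mul_exp_of_le hy0 hy⟩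
    · exact ⟨_, by nlinarith [sq_nonneg (y - 72 / 91 - 1 / 50000)],
        rescaledProd_le_mul_exp_of_ge hy hy1⟩
  have hexp : 1 ≤ 1.01 * exp x := by linarith [add_one_le_exp x]
  nlinarith [rescaledProd_nonneg n₀_pos hy0 hy1]

lemma exp_le_of_le_16 {x : ℝ} (hx : x ≤ 1.6) : exp x ≤ 4.96 := by
  refine (exp_le_exp.2 hx).trans (le_of_pow_le_pow_left₀ (n := 5) (by norm_num) (by norm_num) ?_)
  calc exp 1.6 ^ 5 = exp 1 ^ 8 := by rw [← exp_nat_mul, ← exp_nat_mul]; norm_num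
    _ ≤ 2.7182818286 ^ 8 := by gcongr; exact exp_one_lt_d9.le
    _ ≤ 4.96 ^ 5 := by norm_num

lemma peak_le_mul_exp_of_le (hy : 72 / 91 - 0.00304 ≤ y) (hy1 : y ≤ 72 / 91) :
    rescaledProd n₀ (72 / 91) ≤
      rescaledProd n₀ y * exp (-4 * (y - 72 / 91) + 166989.75 * (y - 72 / 91) ^ 2) := by
  have hanti := le_rescaledProd_mul_exp n₀_pos
    (p := fun x => -4 * (x - 72 / 91) + 166989.75 * (x - 72 / 91) ^ 2)
    (p' := fun x => -4 * 1 + 166989.75 * ((2 : ℕ) * (x - 72 / 91) ^ 1 * 1))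
    (fun x => (((hasDerivAt_id x).sub_const _).const_mul _).add
      ((((hasDerivAt_id x).sub_const _).pow 2).const_mul _)) (by linarith) hy1 (by norm_num)
    fun x hx => ?_
  · simpa using hanti
  · obtain ⟨v, rfl⟩ : ∃ v, x = 72 / 91 - v := ⟨72 / 91 - x, by ring⟩
    have hv0 : 0 ≤ v := by linarith [hx.2]
    have hv1 : v ≤ 0.00304 := by linarith [hx.1]
    have hσ := quadratic_le_meanCotDefect_n₀ (y := 72 / 91 - v) (by linarith) (by linarith)
    rw [sub_sub_cancel_left] at hσ ⊢
    rw [cast_n₀]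
    push_cast
    nlinarith [mul_nonneg hv0 (sub_nonneg.2 hv1)]

lemma peak_le_mul_exp_of_ge (hy : 72 / 91 ≤ y) (hy1 : y ≤ 72 / 91 + 0.00304) :
    rescaledProd n₀ (72 / 91) ≤
      rescaledProd n₀ y * exp (4 * (y - 72 / 91) + 166989.75 * (y - 72 / 91) ^ 2) := by
  have hmono := rescaledProd_mul_exp_le n₀_pos
    (p := fun x => 4 * (x - 72 / 91) + 166989.75 * (x - 72 / 91) ^ 2)
    (p' := fun x => 4 * 1 + 166989.75 * ((2 : ℕ) * (x - 72 / 91) ^ 1 * 1))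
    (fun x => (((hasDerivAt_id x).sub_const _).const_mul _).add
      ((((hasDerivAt_id x).sub_const _).pow 2).const_mul _)) (by norm_num) hy (by linarith)
    fun x hx => ?_
  · simpa using hmono
  · obtain ⟨v, rfl⟩ : ∃ v, x = v + 72 / 91 := ⟨x - 72 / 91, by ring⟩
    have hv0 : 0 ≤ v := by linarith [hx.1]
    have hv1 : v ≤ 0.00304 := by linarith [hx.2]
    have hσ := meanCotDefect_n₀_le_of_le_081 (y := v + 72 / 91) (by linarith) (by linarith)
    rw [add_sub_cancel_right] at hσ ⊢
    rw [cast_n₀]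
    push_cast
    nlinarith [mul_nonneg hv0 (sub_nonneg.2 hv1)]

lemma peak_le_mul_rescaledProd (hy : |y - 72 / 91| ≤ 0.00304) :
    rescaledProd n₀ (72 / 91) ≤ 4.96 * rescaledProd n₀ y := by
  have hsq : (y - 72 / 91) ^ 2 ≤ 0.00304 ^ 2 := sq_le_sq' (abs_le.1 hy).1 (abs_le.1 hy).2
  obtain ⟨hlower, hupper⟩ := abs_le.1 hy
  obtain ⟨x, hx, hle⟩ : ∃ x : ℝ, x ≤ 1.6 ∧
      rescaledProd n₀ (72 / 91) ≤ rescaledProd n₀ y * exp x := by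
    rcases le_total y (72 / 91) with h | h
    · exact ⟨_, by linarith, peak_le_mul_exp_of_le (by linarith) h⟩
    · exact ⟨_, by linarith, peak_le_mul_exp_of_ge h (by linarith)⟩
  have hnonneg := rescaledProd_nonneg (y := y) n₀_pos (by linarith) (by linarith)
  nlinarith [exp_le_of_le_16 hx]

end Peak

section Bathtub

lemma mul_rescaledMass_le_integral :
    (0.00316 ^ 2 - 0.21 / 63015) * rescaledMass n₀ ≤
      ∫ y in (0 : ℝ)..1, rescaledProd n₀ y * (0.00316 ^ 2 - (y - 72 / 91) ^ 2) := by
  simp only [mul_sub, mul_comm (rescaledProd n₀ _) (0.00316 ^ 2)]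
  rw [intervalIntegral.integral_sub (Continuous.intervalIntegrable (by fun_prop) _ _)
    (Continuous.intervalIntegrable (by fun_prop) _ _), intervalIntegral.integral_const_mul]
  have hmoment := integral_mul_sq_le
  unfold rescaledMass at *
  linarith

lemma integral_sq_sub_sub_sq (c r : ℝ) :
    ∫ y in (c - r)..(c + r), (r ^ 2 - (y - c) ^ 2) = 4 / 3 * r ^ 3 := by
  rw [intervalIntegral.integral_comp_sub_right (fun y => r ^ 2 - y ^ 2),
    intervalIntegral.integral_sub (Continuous.intervalIntegrable (by fun_prop) _ _)
      (Continuous.intervalIntegrable (by fun_prop) _ _), intervalIntegral.integral_const,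
    integral_pow, smul_eq_mul]
  push_cast
  ring

lemma integral_peak_le :
    ∫ y in (72 / 91 - 0.00316 : ℝ)..(72 / 91 + 0.00316),
      rescaledProd n₀ y * (0.00316 ^ 2 - (y - 72 / 91) ^ 2) ≤
        1.01 * rescaledProd n₀ (72 / 91) * (4 / 3 * 0.00316 ^ 3) := by
  rw [← integral_sq_sub_sub_sq (72 / 91), ← intervalIntegral.integral_const_mul]
  refine intervalIntegral.integral_mono_on (by norm_num)
    (Continuous.intervalIntegrable (by fun_prop) _ _)
    (Continuous.intervalIntegrable (by fun_prop) _ _) fun y hy => ?_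
  have hsq : (y - 72 / 91) ^ 2 ≤ 0.00316 ^ 2 := by
    apply sq_le_sq' <;> linarith [hy.1, hy.2]
  exact mul_le_mul_of_nonneg_right
    (rescaledProd_le_peak (by linarith [hy.1]) (by linarith [hy.2])) (sub_nonneg.2 hsq)

-- Integrating `r² - (y - c)²` against `E` keeps most of the mass when `r` exceeds the standard
-- deviation, while only `|y - c| ≤ r` contributes positively.
theorem rescaledMass_le_mul_peak :
    rescaledMass n₀ ≤ 0.0064 * (1.01 * rescaledProd n₀ (72 / 91)) := by
  have hint (a b : ℝ) : IntervalIntegrable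
      (fun y => rescaledProd n₀ y * (0.00316 ^ 2 - (y - 72 / 91) ^ 2)) volume a b :=
    Continuous.intervalIntegrable (by fun_prop) _ _
  have hlower := mul_rescaledMass_le_integral
  rw [← intervalIntegral.integral_add_adjacent_intervals (hint 0 (72 / 91 - 0.00316)) (hint _ 1),
    ← intervalIntegral.integral_add_adjacent_intervals
      (hint (72 / 91 - 0.00316) (72 / 91 + 0.00316)) (hint _ 1)] at hlower
  have hleft : ∫ y in (0 : ℝ)..(72 / 91 - 0.00316),
      rescaledProd n₀ y * (0.00316 ^ 2 - (y - 72 / 91) ^ 2) ≤ 0 := by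
    refine intervalIntegral_nonpos (by norm_num) fun y hy => ?_
    exact mul_nonpos_of_nonneg_of_nonpos
      (rescaledProd_nonneg n₀_pos hy.1 (hy.2.trans (by norm_num))) (by nlinarith [hy.2])
  have hright : ∫ y in (72 / 91 + 0.00316 : ℝ)..1,
      rescaledProd n₀ y * (0.00316 ^ 2 - (y - 72 / 91) ^ 2) ≤ 0 := by
    refine intervalIntegral_nonpos (by norm_num) fun y hy => ?_
    exact mul_nonpos_of_nonneg_of_nonpos
      (rescaledProd_nonneg n₀_pos (hy.1.trans' (by norm_num)) hy.2) (by nlinarith [hy.1])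
  linarith [integral_peak_le, rescaledMass_nonneg n₀_pos]

end Bathtub

/-! ### Bounds for the sine transform -/

section SineTransform

/-- The sine transform of the rescaled product at frequency `d`, where `θ = 2 π y / n`: the part of
`∫ sineProd n θ * sin (d θ)` coming from `0 ≤ θ ≤ 2 π / n`, up to the factor `2 π / n`. -/
noncomputable def sineTransform (n : ℕ) (d : ℝ) : ℝ :=
  ∫ y in (0 : ℝ)..1, rescaledProd n y * sin (π * (2 * d / n) * y)

theorem mul_rescaledMass_le_sineTransform_19911 :
    (1 - 0.415 / 63015) * rescaledMass n₀ ≤ sineTransform n₀ 19911 := by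
  have hmono : ∫ y in (0 : ℝ)..1, ((1 - 0.0005 / 63015) * rescaledProd n₀ y -
      1.972 * (rescaledProd n₀ y * (y - 72 / 91) ^ 2)) ≤ sineTransform n₀ 19911 := by
    refine intervalIntegral.integral_mono_on zero_le_one
      (Continuous.intervalIntegrable (by fun_prop) _ _)
      (Continuous.intervalIntegrable (by fun_prop) _ _) fun y hy => ?_
    have hnonneg := rescaledProd_nonneg n₀_pos hy.1 hy.2
    have hsin := mul_le_mul_of_nonneg_left (one_sub_sq_le_sin_39822 y) hnonneg
    rw [cast_n₀, show (2 * 19911 / 63015 : ℝ) = 39822 / 63015 by norm_num]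
    linarith
  rw [intervalIntegral.integral_sub (Continuous.intervalIntegrable (by fun_prop) _ _)
    (Continuous.intervalIntegrable (by fun_prop) _ _),
    intervalIntegral.integral_const_mul, intervalIntegral.integral_const_mul] at hmono
  have hmass := rescaledMass_nonneg n₀_pos
  have hmoment := integral_mul_sq_le
  rw [rescaledMass] at *
  linarith

lemma abs_sineTransform_le {n : ℕ} (hn : 0 < n) {d : ℝ} {s : ℝ → ℝ} (hs : Continuous s)
    (hle : ∀ y, |sin (π * (2 * d / n) * y)| ≤ s y) :
    |sineTransform n d| ≤ ∫ y in (0 : ℝ)..1, rescaledProd n y * s y := by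
  refine (intervalIntegral.abs_integral_le_integral_abs zero_le_one).trans ?_
  refine intervalIntegral.integral_mono_on zero_le_one
    (Continuous.intervalIntegrable (by fun_prop) _ _)
    (Continuous.intervalIntegrable (by fun_prop) _ _) fun y hy => ?_
  have hnonneg := rescaledProd_nonneg hn hy.1 hy.2
  rw [abs_mul, abs_of_nonneg hnonneg]
  exact mul_le_mul_of_nonneg_left (hle y) hnonneg

lemma abs_sin_mul_peak_le {c : ℝ} (hc : 4.29 ≤ c) (hc1 : c ≤ 5.7) :
    |sin (c * (72 / 91))| ≤ 0.981 := by
  set t := 3 * π / 2 - c * (72 / 91) with ht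
  have ht0 : 0.2 ≤ t := by linarith [pi_gt_d6]
  have ht1 : t ≤ π / 2 := by linarith [pi_lt_d6]
  have hsin : sin (c * (72 / 91)) = -cos t := by
    rw [ht, show 3 * π / 2 - c * (72 / 91) = π / 2 - c * (72 / 91) + π by ring, cos_add_pi,
      cos_pi_div_two_sub, neg_neg]
  have hcos : cos t ≤ cos 0.2 :=
    cos_le_cos_of_nonneg_of_le_pi (by norm_num) (by linarith [pi_pos]) ht0
  have hbound := (abs_le.1 (cos_bound (x := 0.2) (by norm_num [abs_of_pos]))).2
  rw [hsin, abs_neg, abs_of_nonneg (cos_nonneg_of_mem_Icc ⟨by linarith, ht1⟩)]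
  norm_num [abs_of_pos] at hcos hbound ⊢
  linarith

lemma abs_sin_mul_le_add_sq {c : ℝ} (hc : 4.29 ≤ c) (hc1 : c ≤ 5.7) (y : ℝ) :
    |sin (c * y)| ≤ 0.98613 + 5.7 / 0.0036 * (y - 72 / 91) ^ 2 := by
  have hlip := abs_sin_sub_sin_le (c * y) (c * (72 / 91))
  rw [← mul_sub, abs_mul, abs_of_nonneg (show 0 ≤ c by linarith)] at hlip
  have hmul : c * |y - 72 / 91| ≤ 5.7 * |y - 72 / 91| := by gcongr
  have hamgm : |y - 72 / 91| ≤ 0.0009 + (y - 72 / 91) ^ 2 / 0.0036 := by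
    rw [← sq_abs (y - 72 / 91)]
    generalize |y - 72 / 91| = v
    have hsq := sq_nonneg (v - 0.0018)
    norm_num at hsq ⊢
    linarith
  have hsub := abs_sub_abs_le_abs_sub (sin (c * y)) (sin (c * (72 / 91)))
  have hpeak := abs_sin_mul_peak_le hc hc1
  norm_num at hmul hamgm hsub hpeak ⊢
  linarith

lemma abs_sineTransform_le_of_le_57100 {d : ℝ} (hd : 43103 ≤ d) (hd1 : d ≤ 57100) :
    |sineTransform n₀ d| ≤ (1 - 0.44 / 63015) * rescaledMass n₀ := by
  have hfreq : 4.29 ≤ π * (2 * d / n₀) ∧ π * (2 * d / n₀) ≤ 5.7 := by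
    rw [cast_n₀]
    constructor <;> nlinarith [pi_gt_d6, pi_lt_d6]
  have hle := abs_sineTransform_le n₀_pos (by fun_prop) (abs_sin_mul_le_add_sq hfreq.1 hfreq.2)
  simp only [mul_add, mul_comm (rescaledProd n₀ _) 0.98613, mul_left_comm (rescaledProd n₀ _)]
    at hle
  rw [intervalIntegral.integral_add (Continuous.intervalIntegrable (by fun_prop) _ _)
    (Continuous.intervalIntegrable (by fun_prop) _ _), intervalIntegral.integral_const_mul,
    intervalIntegral.integral_const_mul, ← rescaledMass] at hle
  linarith [integral_mul_sq_le, rescaledMass_nonneg n₀_pos]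

lemma peak_mul_integral_le_integral_rescaledProd_mul {f : ℝ → ℝ} (hf : Continuous f)
    (hf0 : ∀ y, 0 ≤ f y) :
    rescaledProd n₀ (72 / 91) / 4.96 * ∫ y in (72 / 91 - 0.00304 : ℝ)..(72 / 91 + 0.00304), f y ≤
      ∫ y in (0 : ℝ)..1, rescaledProd n₀ y * f y := by
  rw [← intervalIntegral.integral_const_mul]
  refine (intervalIntegral.integral_mono_on (by norm_num)
    (Continuous.intervalIntegrable (by fun_prop) _ _)
    (Continuous.intervalIntegrable (by fun_prop) _ _) fun y hy => ?_).trans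
      (intervalIntegral.integral_mono_interval (by norm_num) (by norm_num) (by norm_num)
        (ae_restrict_of_forall_mem measurableSet_Ioc fun y hy => ?_)
        (Continuous.intervalIntegrable (u := fun y => rescaledProd n₀ y * f y) (by fun_prop) _ _))
  · have hlocal := peak_le_mul_rescaledProd (y := y)
      (abs_le.2 ⟨by linarith [hy.1], by linarith [hy.2]⟩)
    exact mul_le_mul_of_nonneg_right ((div_le_iff₀' (by norm_num)).2 hlocal) (hf0 y)
  · exact mul_nonneg (rescaledProd_nonneg n₀_pos hy.1.le hy.2) (hf0 y)

lemma mul_peak_le_rescaledMass : 0.001 * rescaledProd n₀ (72 / 91) ≤ rescaledMass n₀ := by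
  have hle := peak_mul_integral_le_integral_rescaledProd_mul continuous_const
    fun _ => zero_le_one (α := ℝ)
  simp only [mul_one, intervalIntegral.integral_const, smul_eq_mul] at hle
  rw [← rescaledMass] at hle
  have hpeak := rescaledProd_nonneg (y := 72 / 91) n₀_pos (by norm_num) (by norm_num)
  norm_num at hle hpeak ⊢
  linarith

lemma abs_sin_le_mul {x : ℝ} (hx : 0.01729 ≤ x) : |sin x| ≤ (1 - 0.000037) * x := by
  rcases le_total x π with hxπ | hxπ
  · have hhalf : sin x = 2 * sin (x / 2) * cos (x / 2) := by rw [← sin_two_mul]; ring_nf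
    have hcos0 : 0 ≤ cos (x / 2) := cos_nonneg_of_mem_Icc ⟨by linarith, by linarith⟩
    have hcos : cos (x / 2) ≤ 1 - 0.000037 := by
      refine (cos_le_cos_of_nonneg_of_le_pi (x := 0.008645) (by norm_num) (by linarith)
        (by linarith)).trans ?_
      have hbound := (abs_le.1 (cos_bound (x := 0.008645) (by norm_num [abs_of_pos]))).2
      norm_num [abs_of_pos] at hbound ⊢
      linarith
    rw [abs_of_nonneg (sin_nonneg_of_nonneg_of_le_pi (by linarith) hxπ), hhalf]
    nlinarith [sin_le (x := x / 2) (by linarith)]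
  · linarith [abs_sin_le_one x, pi_gt_three]

lemma integral_sin_mul_add_sub {c : ℝ} (hc : c ≠ 0) (z r : ℝ) :
    ∫ y in (z - r)..(z + r), sin (c * y) = 2 * sin (c * z) * sin (c * r) / c := by
  rw [intervalIntegral.integral_comp_mul_left sin hc, integral_sin, smul_eq_mul, mul_sub c,
    mul_add c, cos_sub, cos_add]
  field_simp
  ring

lemma abs_integral_sin_mul_add_sub_le {c : ℝ} (hc : 0 < c) (z r : ℝ) :
    |∫ y in (z - r)..(z + r), sin (c * y)| ≤ 2 * |sin (c * r)| / c := by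
  rw [integral_sin_mul_add_sub hc.ne', abs_div, abs_of_pos hc, abs_mul, abs_mul, abs_two]
  gcongr
  exact mul_le_of_le_one_right zero_le_two (abs_sin_le_one _)

-- `mass ± J = ∫ E (1 ± sin)` is at least the contribution of the peak, where `sin` oscillates too
-- slowly to average to `± 1`.
lemma abs_sineTransform_le_rescaledMass_sub (d : ℝ) :
    |sineTransform n₀ d| ≤ rescaledMass n₀ - rescaledProd n₀ (72 / 91) / 4.96 *
      (0.00608 - |∫ y in (72 / 91 - 0.00304 : ℝ)..(72 / 91 + 0.00304),
        sin (π * (2 * d / n₀) * y)|) := by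
  have hpeak : 0 ≤ rescaledProd n₀ (72 / 91) / 4.96 :=
    div_nonneg (rescaledProd_nonneg n₀_pos (by norm_num) (by norm_num)) (by norm_num)
  have hadd := peak_mul_integral_le_integral_rescaledProd_mul
    (f := fun y => 1 + sin (π * (2 * d / n₀) * y)) (by fun_prop)
    fun y => by linarith [neg_one_le_sin (π * (2 * d / n₀) * y)]
  have hsub := peak_mul_integral_le_integral_rescaledProd_mul
    (f := fun y => 1 - sin (π * (2 * d / n₀) * y)) (by fun_prop)
    fun y => by linarith [sin_le_one (π * (2 * d / n₀) * y)]
  have hint (a b : ℝ) : IntervalIntegrable (fun y => sin (π * (2 * d / n₀) * y)) volume a b :=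
    Continuous.intervalIntegrable (by fun_prop) _ _
  have hintE (a b : ℝ) : IntervalIntegrable
      (fun y => rescaledProd n₀ y * sin (π * (2 * d / n₀) * y)) volume a b :=
    Continuous.intervalIntegrable (by fun_prop) _ _
  simp only [mul_add (rescaledProd _ _), mul_sub (rescaledProd _ _), mul_one] at hadd hsub
  rw [intervalIntegral.integral_add intervalIntegrable_const (hint _ _),
    intervalIntegral.integral_add (Continuous.intervalIntegrable (by fun_prop) _ _) (hintE _ _),
    intervalIntegral.integral_const, smul_eq_mul, ← rescaledMass, ← sineTransform] at hadd
  rw [intervalIntegral.integral_sub intervalIntegrable_const (hint _ _),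
    intervalIntegral.integral_sub (Continuous.intervalIntegrable (by fun_prop) _ _) (hintE _ _),
    intervalIntegral.integral_const, smul_eq_mul, ← rescaledMass, ← sineTransform] at hsub
  set I := ∫ y in (72 / 91 - 0.00304 : ℝ)..(72 / 91 + 0.00304), sin (π * (2 * d / n₀) * y)
  have hI := mul_le_mul_of_nonneg_left (le_abs_self I) hpeak
  have hI' := mul_le_mul_of_nonneg_left (neg_abs_le I) hpeak
  rw [abs_le]
  constructor <;> linarith

lemma abs_sineTransform_le_of_ge_57100 {d : ℝ} (hd : 57100 ≤ d) :
    |sineTransform n₀ d| ≤ (1 - 0.44 / 63015) * rescaledMass n₀ := by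
  set c := π * (2 * d / n₀) with hc
  have hc0 : 5.69 ≤ c := by
    rw [hc, cast_n₀]
    nlinarith [pi_gt_d6]
  have hsin : |∫ y in (72 / 91 - 0.00304 : ℝ)..(72 / 91 + 0.00304), sin (c * y)| ≤
      0.00608 * (1 - 0.000037) := by
    refine (abs_integral_sin_mul_add_sub_le (by linarith) _ _).trans ?_
    rw [div_le_iff₀ (by linarith)]
    linarith [abs_sin_le_mul (x := c * 0.00304) (by linarith)]
  have hpeak := rescaledProd_nonneg (y := 72 / 91) n₀_pos (by norm_num) (by norm_num)
  have hle := abs_sineTransform_le_rescaledMass_sub d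
  rw [← hc] at hle
  have hmass := rescaledMass_le_mul_peak
  generalize rescaledProd n₀ (72 / 91) = p at *
  generalize |∫ y in (72 / 91 - 0.00304 : ℝ)..(72 / 91 + 0.00304), sin (c * y)| = I at *
  have hmul : p / 4.96 * I ≤ p / 4.96 * (0.00608 * (1 - 0.000037)) := by gcongr
  norm_num at hle hmul hmass ⊢
  linarith

lemma abs_sineTransform_le_of_ge_43103 {d : ℝ} (hd : 43103 ≤ d) :
    |sineTransform n₀ d| ≤ (1 - 0.44 / 63015) * rescaledMass n₀ :=
  (le_total d 57100).elim (abs_sineTransform_le_of_le_57100 hd) abs_sineTransform_le_of_ge_57100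

end SineTransform

/-! ### The size of the peak -/

section PeakSize

open scoped Nat

lemma factorial_le_stirling {n : ℕ} (hn : n ≠ 0) :
    (n ! : ℝ) ≤ exp 1 * √n * (n / exp 1) ^ n := by
  obtain ⟨m, rfl⟩ := Nat.exists_eq_succ_of_ne_zero hn
  have hanti : Stirling.stirlingSeq (m + 1) ≤ Stirling.stirlingSeq 1 :=
    Stirling.stirlingSeq'_antitone m.zero_le
  rw [Stirling.stirlingSeq_one, Stirling.stirlingSeq, div_le_iff₀ (by positivity),
    sqrt_mul zero_le_two] at hanti
  refine hanti.trans_eq ?_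
  field_simp

lemma sineProd_two_pi_div (n : ℕ) : sineProd n (2 * π / (n + 1)) = n + 1 := by
  have hprod := congrArg norm
    (Complex.isPrimitiveRoot_exp (n + 1) n.succ_ne_zero).prod_one_sub_pow_eq_order
  rw [norm_prod, ← Nat.cast_add_one, Complex.norm_natCast] at hprod
  rw [range_eq_Ico, prod_Ico_add' (fun k => ‖1 - _ ^ k‖) 0 n 1] at hprod
  refine Eq.trans ?_ (hprod.trans (Nat.cast_add_one n))
  rw [sineProd, ← Nat.cast_add_one]
  refine prod_congr rfl fun k hk => ?_
  have hle : (k : ℝ) ≤ (n + 1 : ℕ) := by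
    exact_mod_cast (mem_Icc.1 hk).2.trans n.le_succ
  have hsin : 0 ≤ sin (k * (2 * π / (n + 1 : ℕ)) / 2) := by
    refine sin_nonneg_of_nonneg_of_le_pi (by positivity) ?_
    rw [show k * (2 * π / (n + 1 : ℕ)) / 2 = π * (k / (n + 1 : ℕ)) by ring]
    exact mul_le_of_le_one_right pi_nonneg (div_le_one_of_le₀ hle (by positivity))
  rw [← Complex.exp_nat_mul, norm_sub_rev,
    show (k : ℂ) * (2 * π * Complex.I / (n + 1 : ℕ)) =
      Complex.I * (k * (2 * π / (n + 1 : ℕ)) : ℝ) by push_cast; ring,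
    Complex.norm_exp_I_mul_ofReal_sub_one, norm_of_nonneg (by positivity)]

-- The factors `n < k ≤ n + m` of `sineProd (n + m)` are, by `sin (π - x) = sin x`, those of
-- `sineProd m` in reverse order.
lemma sineProd_mul_sineProd_two_pi_div (n m : ℕ) :
    sineProd n (2 * π / (n + m + 1)) * sineProd m (2 * π / (n + m + 1)) = n + m + 1 := by
  have htotal := sineProd_two_pi_div (n + m)
  push_cast at htotal
  have hreflect : ∏ k ∈ Ico (n + 1) (n + m + 1), (2 * sin (k * (2 * π / (n + m + 1)) / 2)) =
      sineProd m (2 * π / (n + m + 1)) := by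
    have hflip := prod_Ico_reflect (fun k : ℕ => 2 * sin (k * (2 * π / (n + m + 1)) / 2)) 0
      (show m ≤ n + m + 1 by lia)
    rw [show n + m + 1 - m = n + 1 by lia, Nat.sub_zero] at hflip
    rw [← hflip, sineProd, show Icc 1 m = Ico (0 + 1) (m + 1) from rfl, ← prod_Ico_add']
    refine prod_congr rfl fun k hk => ?_
    rw [Nat.cast_sub (by grind), ← sin_pi_sub]
    congr 2
    push_cast
    field_simp
    ring
  rw [← hreflect]
  exact (prod_Ico_consecutive _ (by lia) (by lia)).trans htotal

lemma sineProd_le_pow_mul_factorial {n : ℕ} {θ : ℝ} (hθ0 : 0 ≤ θ) (hθ : n * θ / 2 ≤ π) :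
    sineProd n θ ≤ θ ^ n * n ! := by
  have hle {k : ℕ} (hk : k ∈ Icc 1 n) : k * θ / 2 ≤ n * θ / 2 := by
    gcongr
    exact (mem_Icc.1 hk).2
  have hfact : ∏ k ∈ Icc 1 n, (θ * k) = θ ^ n * n ! := by
    rw [prod_mul_distrib, prod_const, Nat.card_Icc, Nat.add_sub_cancel, ← Nat.cast_prod,
      ← prod_Ico_id_eq_factorial]
    rfl
  rw [sineProd, ← hfact]
  refine prod_le_prod (fun k hk => ?_) fun k _ => ?_
  · exact mul_nonneg zero_le_two
      (sin_nonneg_of_nonneg_of_le_pi (by positivity) ((hle hk).trans hθ))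
  · linarith [sin_le (x := k * θ / 2) (by positivity)]

lemma sineProd_le_stirling {n : ℕ} (hn : n ≠ 0) {θ : ℝ} (hθ0 : 0 ≤ θ) (hθ : n * θ / 2 ≤ π) :
    sineProd n θ ≤ exp 1 * √n * (θ * (n / exp 1)) ^ n :=
  calc sineProd n θ ≤ θ ^ n * n ! := sineProd_le_pow_mul_factorial hθ0 hθ
    _ ≤ θ ^ n * (exp 1 * √n * (n / exp 1) ^ n) := by
        gcongr
        exact factorial_le_stirling hn
    _ = exp 1 * √n * (θ * (n / exp 1)) ^ n := by ring

lemma exp_07_le : exp 0.7 ≤ 2.05 := by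
  have hpow : exp 0.7 ^ 10 ≤ 2.05 ^ 10 := by
    rw [← exp_nat_mul, show ((10 : ℕ) : ℝ) * 0.7 = (7 : ℕ) * 1 by norm_num, exp_nat_mul]
    refine (pow_le_pow_left₀ (exp_pos _).le exp_one_lt_d9.le 7).trans ?_
    norm_num
  exact le_of_pow_le_pow_left₀ (by norm_num) (by norm_num) hpow

lemma sineProd_16628_le : sineProd 16628 (2 * π / 79644) ≤ 387 * exp (-11639.6) := by
  have hbase : 2 * π / 79644 * (16628 / exp 1) ≤ exp (-0.7) := by
    rw [exp_neg]
    calc 2 * π / 79644 * (16628 / exp 1) ≤ 2 * 3.1416 / 79644 * (16628 / 2.7) := by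
          gcongr
          · exact pi_lt_d4.le
          · linarith [exp_one_gt_d9]
      _ ≤ 2.05⁻¹ := by norm_num
      _ ≤ (exp 0.7)⁻¹ := by
          gcongr
          exact exp_07_le
  have hsqrt : exp 1 * √(16628 : ℕ) ≤ 387 := by
    have hle : √(16628 : ℕ) ≤ 129 := sqrt_le_left (by norm_num) |>.2 (by norm_num)
    nlinarith [exp_one_lt_three, exp_pos 1]
  calc sineProd 16628 (2 * π / 79644)
      ≤ exp 1 * √(16628 : ℕ) * (2 * π / 79644 * ((16628 : ℕ) / exp 1)) ^ 16628 :=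
        sineProd_le_stirling (by norm_num) (by positivity) (by push_cast; linarith [pi_pos])
    _ ≤ 387 * exp (-0.7) ^ 16628 := by
        gcongr
        exact_mod_cast hbase
    _ = 387 * exp (-11639.6) := by rw [← exp_nat_mul]; norm_num

-- At `θ = 2 π / 79644`, close to the peak, `sineProd_mul_sineProd_two_pi_div` with
-- `n₀ + 16628 + 1 = 79644` turns an upper bound for `sineProd 16628` into a lower bound.
lemma exp_11638_le_peak : exp 11638 ≤ 1.01 * rescaledProd n₀ (72 / 91) := by
  have hmul := sineProd_mul_sineProd_two_pi_div n₀ 16628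
  have hresc : rescaledProd n₀ (63015 / 79644) = sineProd n₀ (2 * π / 79644) := by
    rw [rescaledProd, cast_n₀]
    congr 1
    ring
  rw [cast_n₀, show (63015 + (16628 : ℕ) + 1 : ℝ) = 79644 by norm_num, ← hresc] at hmul
  refine le_trans ?_ (rescaledProd_le_peak (y := 63015 / 79644) (by norm_num) (by norm_num))
  have hnonneg := rescaledProd_nonneg (y := 63015 / 79644) n₀_pos (by norm_num) (by norm_num)
  have hle := mul_le_mul_of_nonneg_left sineProd_16628_le hnonneg
  have hcancel : exp (-11639.6) * exp 11638 ≤ 1 := by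
    rw [← exp_add]
    exact exp_le_one_iff.2 (by norm_num)
  nlinarith [exp_pos 11638]

end PeakSize

/-! ### Monotonicity of the sine transform -/

section Monotonicity

/-- The integral of the rescaled product against `stepWeight`: up to the factor `2`, the trivial
bound for `sineTransform n₀ (d + 1) - sineTransform n₀ d`. -/
noncomputable def stepMass : ℝ := ∫ y in (0 : ℝ)..1, rescaledProd n₀ y * stepWeight y

/-- The cosine transform, at frequency `c / 2`, of the rescaled product weighted by `stepWeight`; at
`c = 2 * d + 1` it is half the increment of `sineTransform n₀` at `d`. -/
noncomputable def stepTransform (c : ℝ) : ℝ :=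
  ∫ y in (0 : ℝ)..1, rescaledProd n₀ y * (stepWeight y * cos (π * (c / 63015) * y))

lemma two_div_mul_le_stepWeight {y : ℝ} (hy0 : 0 ≤ y) (hy1 : y ≤ 1) :
    2 / 63015 * y ≤ stepWeight y := by
  have hjordan := mul_le_sin (x := π * (y / 63015)) (by positivity) (by nlinarith [pi_pos])
  refine Eq.trans_le ?_ hjordan
  field_simp

lemma mul_rescaledMass_le_stepMass : 0.8 / 63015 * rescaledMass n₀ ≤ stepMass := by
  have hmono : ∫ y in (0 : ℝ)..1, (1 / 63015 * rescaledProd n₀ y -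
      2 / 63015 * (rescaledProd n₀ y * (y - 72 / 91) ^ 2)) ≤ stepMass := by
    refine intervalIntegral.integral_mono_on zero_le_one
      (Continuous.intervalIntegrable (by fun_prop) _ _)
      (Continuous.intervalIntegrable (by fun_prop) _ _) fun y hy => ?_
    have hweight : 1 / 63015 - 2 / 63015 * (y - 72 / 91) ^ 2 ≤ stepWeight y := by
      linarith [two_div_mul_le_stepWeight hy.1 hy.2, sq_nonneg (y - 72 / 91 + 1 / 2)]
    linarith [mul_le_mul_of_nonneg_left hweight (rescaledProd_nonneg n₀_pos hy.1 hy.2)]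
  rw [intervalIntegral.integral_sub (Continuous.intervalIntegrable (by fun_prop) _ _)
    (Continuous.intervalIntegrable (by fun_prop) _ _), intervalIntegral.integral_const_mul,
    intervalIntegral.integral_const_mul, ← rescaledMass] at hmono
  linarith [integral_mul_sq_le, rescaledMass_nonneg n₀_pos]

lemma mul_stepMass_le_stepTransform_39821 : 0.1 / 63015 * stepMass ≤ stepTransform 39821 := by
  have hnonneg := integral_mul_cos_39821_nonneg
  simp only [mul_sub, mul_comm (stepWeight _) (0.1 / 63015), mul_left_comm (rescaledProd _ _)
    (0.1 / 63015)] at hnonneg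
  rw [intervalIntegral.integral_sub (Continuous.intervalIntegrable (by fun_prop) _ _)
    (Continuous.intervalIntegrable (by fun_prop) _ _), intervalIntegral.integral_const_mul,
    ← stepMass] at hnonneg
  exact sub_nonneg.1 hnonneg

lemma stepTransform_39823_le : stepTransform 39823 ≤ -(0.1 / 63015 * stepMass) := by
  have hnonneg := integral_mul_neg_cos_39823_nonneg
  simp only [mul_sub, mul_neg, mul_comm (stepWeight _) (0.1 / 63015),
    mul_left_comm (rescaledProd _ _) (0.1 / 63015)] at hnonneg
  rw [intervalIntegral.integral_sub (Continuous.intervalIntegrable (by fun_prop) _ _)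
    (Continuous.intervalIntegrable (by fun_prop) _ _), intervalIntegral.integral_const_mul,
    intervalIntegral.integral_neg, ← stepMass] at hnonneg
  exact le_neg_of_le_neg (sub_nonneg.1 hnonneg)

lemma sineTransform_add_one_sub (d : ℝ) :
    sineTransform n₀ (d + 1) - sineTransform n₀ d = 2 * stepTransform (2 * d + 1) := by
  unfold sineTransform stepTransform stepWeight
  rw [← intervalIntegral.integral_sub (Continuous.intervalIntegrable (by fun_prop) _ _)
    (Continuous.intervalIntegrable (by fun_prop) _ _), ← intervalIntegral.integral_const_mul]
  refine intervalIntegral.integral_congr fun y _ => ?_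
  have hhalf : (π * (2 * (d + 1) / 63015) * y - π * (2 * d / 63015) * y) / 2 =
      π * (y / 63015) := by ring
  have hmean : (π * (2 * (d + 1) / 63015) * y + π * (2 * d / 63015) * y) / 2 =
      π * ((2 * d + 1) / 63015) * y := by ring
  simp only [cast_n₀]
  rw [← mul_sub, sin_sub_sin, hhalf, hmean]
  ring

lemma cos_le_cos_of_add_le_two_pi {x y : ℝ} (hx : 0 ≤ x) (hxy : x ≤ y) (hadd : x + y ≤ 2 * π) :
    cos y ≤ cos x := by
  have hsub := cos_sub_cos y x
  have hmean := sin_nonneg_of_nonneg_of_le_pi (x := (y + x) / 2) (by linarith) (by linarith)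
  have hhalf := sin_nonneg_of_nonneg_of_le_pi (x := (y - x) / 2) (by linarith) (by linarith)
  linarith [mul_nonneg hmean hhalf]

lemma stepTransform_le_of_add_le {b c : ℝ} (hb : 0 ≤ b) (hbc : b ≤ c) (hadd : b + c ≤ 126030) :
    stepTransform c ≤ stepTransform b := by
  refine intervalIntegral.integral_mono_on_of_le_Ioo zero_le_one
    (Continuous.intervalIntegrable (by fun_prop) _ _)
    (Continuous.intervalIntegrable (by fun_prop) _ _) fun y hy => ?_
  have hy0 := hy.1.le
  have hcos : cos (π * (c / 63015) * y) ≤ cos (π * (b / 63015) * y) := by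
    refine cos_le_cos_of_add_le_two_pi (by positivity) (by gcongr) ?_
    calc π * (b / 63015) * y + π * (c / 63015) * y = π * ((b + c) / 63015) * y := by ring
      _ ≤ π * (126030 / 63015) * 1 := by
          gcongr
          exact hy.2.le
      _ = 2 * π := by ring
  have hweight := stepWeight_nonneg hy.1 hy.2
  have hprod := rescaledProd_nonneg n₀_pos hy.1.le hy.2.le
  gcongr

lemma sineTransform_add_le_of_le_19910 {d : ℕ} (hd : d ≤ 19910) :
    sineTransform n₀ d + 0.16 / 63015 ^ 2 * rescaledMass n₀ ≤ sineTransform n₀ (d + 1) := by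
  have hd' : (d : ℝ) ≤ 19910 := by exact_mod_cast hd
  linarith [sineTransform_add_one_sub d, mul_stepMass_le_stepTransform_39821,
    mul_rescaledMass_le_stepMass,
    stepTransform_le_of_add_le (b := 2 * d + 1) (c := 39821) (by positivity) (by linarith)
      (by linarith)]

lemma sineTransform_add_one_le_of_ge_19911 {d : ℕ} (hd0 : 19911 ≤ d) (hd : d ≤ 43102) :
    sineTransform n₀ (d + 1) ≤ sineTransform n₀ d - 0.16 / 63015 ^ 2 * rescaledMass n₀ := by
  have hd0' : (19911 : ℝ) ≤ d := by exact_mod_cast hd0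
  have hd' : (d : ℝ) ≤ 43102 := by exact_mod_cast hd
  linarith [sineTransform_add_one_sub d, stepTransform_39823_le, mul_rescaledMass_le_stepMass,
    stepTransform_le_of_add_le (b := 39823) (c := 2 * d + 1) (by norm_num) (by linarith)
      (by linarith)]

lemma monotoneOn_sineTransform : MonotoneOn (fun d : ℕ => sineTransform n₀ d) (Set.Iic 19911) :=
  monotoneOn_of_le_add_one Set.ordConnected_Iic fun d _ _ hd => by
    have hstep := sineTransform_add_le_of_le_19910 (Nat.le_of_lt_succ hd)
    push_cast
    linarith [rescaledMass_nonneg n₀_pos]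

lemma antitoneOn_sineTransform :
    AntitoneOn (fun d : ℕ => sineTransform n₀ d) (Set.Icc 19911 43103) :=
  antitoneOn_of_add_one_le Set.ordConnected_Icc fun d _ hd0 hd => by
    have hstep := sineTransform_add_one_le_of_ge_19911 hd0.1 (Nat.le_of_lt_succ hd.2)
    push_cast
    linarith [rescaledMass_nonneg n₀_pos]

lemma abs_sineTransform_le_of_lt_19911 {d : ℕ} (hd : d < 19911) :
    |sineTransform n₀ d| ≤ sineTransform n₀ 19911 - 0.16 / 63015 ^ 2 * rescaledMass n₀ := by
  have hzero : sineTransform n₀ (0 : ℕ) = 0 := by simp [sineTransform]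
  have hnonneg := monotoneOn_sineTransform (Set.mem_Iic.2 (Nat.zero_le _)) hd.le d.zero_le
  have hle := monotoneOn_sineTransform hd.le (Set.mem_Iic.2 (by norm_num : 19910 ≤ 19911))
    (Nat.le_of_lt_succ hd)
  have hlast := sineTransform_add_le_of_le_19910 le_rfl
  rw [← Nat.cast_add_one] at hlast
  rw [abs_of_nonneg (hzero.ge.trans hnonneg)]
  push_cast at hle hlast ⊢
  linarith

lemma abs_sineTransform_le_of_gt_19911 {d : ℕ} (hd : 19911 < d) :
    |sineTransform n₀ d| ≤ sineTransform n₀ 19911 - 0.16 / 63015 ^ 2 * rescaledMass n₀ := by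
  have hfar {x : ℝ} (hx : 43103 ≤ x) :
      |sineTransform n₀ x| ≤ sineTransform n₀ 19911 - 0.16 / 63015 ^ 2 * rescaledMass n₀ := by
    linarith [abs_sineTransform_le_of_ge_43103 hx, mul_rescaledMass_le_sineTransform_19911,
      rescaledMass_nonneg n₀_pos]
  rcases le_total 43103 d with hd1 | hd1
  · exact hfar (by exact_mod_cast hd1)
  have hlower := antitoneOn_sineTransform ⟨hd.le, hd1⟩ ⟨by norm_num, le_rfl⟩ hd1
  have hupper := antitoneOn_sineTransform ⟨by norm_num, by norm_num⟩ ⟨hd.le, hd1⟩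
    (Nat.succ_le_of_lt hd)
  have hfirst := sineTransform_add_one_le_of_ge_19911 le_rfl (by norm_num)
  have hend := (abs_le.1 (hfar le_rfl)).1
  push_cast at hlower hupper hfirst hend
  rw [abs_le]
  constructor <;> linarith

end Monotonicity

/-! ### The largest coefficient -/

section LargestCoefficient

/-- The integral of `sineProd n` against `sin (d θ)` over `[0, π]`; up to the factor `-π` it is a
coefficient of `(q;q)_n` when `n ≡ 3 (mod 4)`. -/
noncomputable def fullSineTransform (n : ℕ) (d : ℝ) : ℝ :=
  ∫ θ in 0..π, sineProd n θ * sin (d * θ)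

lemma abs_fullSineTransform_natAbs (n : ℕ) (d : ℤ) :
    |fullSineTransform n d.natAbs| = |fullSineTransform n d| := by
  rcases Int.natAbs_eq d with hd | hd <;> rw [hd] <;> simp [fullSineTransform]

lemma two_pi_div_mul_sineTransform {n : ℕ} (hn : 0 < n) (d : ℝ) :
    2 * π / n * sineTransform n d = ∫ θ in 0..2 * π / n, sineProd n θ * sin (d * θ) := by
  have hscale := intervalIntegral.integral_comp_mul_left (a := 0) (b := 1)
    (fun θ => sineProd n θ * sin (d * θ)) (show 2 * π / n ≠ 0 by positivity)
  rw [mul_zero, mul_one, smul_eq_mul, eq_inv_mul_iff_mul_eq₀ (by positivity)] at hscale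
  rw [← hscale, sineTransform]
  congr 2 with y
  rw [rescaledProd]
  congr 2 <;> ring

lemma abs_fullSineTransform_sub_le (d : ℝ) :
    |fullSineTransform n₀ d - 2 * π / n₀ * sineTransform n₀ d| ≤ π * exp 11468 := by
  have hcont : Continuous fun θ => sineProd n₀ θ * sin (d * θ) := by
    have := continuous_sineProd n₀
    fun_prop
  have hle : 2 * π / n₀ ≤ π := by
    rw [cast_n₀]
    linarith [pi_pos]
  have hbound (θ : ℝ) (hθ : θ ∈ Set.uIoc (2 * π / n₀) π) :
      ‖sineProd n₀ θ * sin (d * θ)‖ ≤ exp 11468 := by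
    rw [Set.uIoc_of_le hle] at hθ
    rw [norm_mul, ← mul_one (exp _)]
    exact mul_le_mul (abs_sineProd_le_of_two_pi_div_le hθ.1.le hθ.2) (abs_sin_le_one _)
      (norm_nonneg _) (exp_pos _).le
  rw [two_pi_div_mul_sineTransform n₀_pos, fullSineTransform,
    intervalIntegral.integral_interval_sub_left (hcont.intervalIntegrable _ _)
      (hcont.intervalIntegrable _ _), mul_comm π]
  refine (intervalIntegral.norm_integral_le_of_norm_le_const hbound).trans ?_
  rw [abs_of_nonneg (sub_nonneg.2 hle)]
  gcongr
  exact sub_le_self _ (by positivity)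

lemma mul_exp_lt_mul_rescaledMass :
    63015 * exp 11468 < 0.16 / 63015 ^ 2 * rescaledMass n₀ := by
  have hpow : (2 : ℝ) ^ 170 ≤ exp 170 := by
    rw [show (170 : ℝ) = (170 : ℕ) * 1 by norm_num, exp_nat_mul]
    gcongr
    exact exp_one_gt_two.le
  have hsplit : exp 11638 = exp 170 * exp 11468 := by rw [← exp_add]; norm_num
  have hpeak := exp_11638_le_peak
  have hmass := mul_peak_le_rescaledMass
  have hmul := mul_le_mul_of_nonneg_right hpow (exp_pos 11468).le
  have hpos := exp_pos 11468
  rw [hsplit] at hpeak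
  norm_num at hpeak hmass hmul ⊢
  linarith

lemma abs_fullSineTransform_lt {d : ℕ} (hd : d ≠ 19911) :
    |fullSineTransform n₀ d| < |fullSineTransform n₀ 19911| := by
  have hgap : |sineTransform n₀ d| + n₀ * exp 11468 < sineTransform n₀ 19911 := by
    rw [cast_n₀]
    rcases hd.lt_or_gt with hlt | hgt
    · linarith [abs_sineTransform_le_of_lt_19911 hlt, mul_exp_lt_mul_rescaledMass]
    · linarith [abs_sineTransform_le_of_gt_19911 hgt, mul_exp_lt_mul_rescaledMass]
  have hn : (0 : ℝ) < n₀ := Nat.cast_pos.2 n₀_pos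
  have hscaled := mul_lt_mul_of_pos_left hgap (show 0 < 2 * π / n₀ by positivity)
  have hupper := abs_sub_abs_le_abs_sub (fullSineTransform n₀ d) (2 * π / n₀ * sineTransform n₀ d)
  rw [abs_mul, abs_of_pos (show 0 < 2 * π / n₀ by positivity)] at hupper
  have hlower := (abs_le.1 (abs_fullSineTransform_sub_le 19911)).1
  have herror : 2 * π / n₀ * (n₀ * exp 11468) = 2 * (π * exp 11468) := by field_simp
  linarith [abs_fullSineTransform_sub_le d, le_abs_self (fullSineTransform n₀ 19911)]

lemma pi_mul_natAbs_a (i : ℕ) :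
    π * ((a n₀ i).natAbs : ℝ) = |fullSineTransform n₀ (992738310 - i : ℤ).natAbs| := by
  have hcoeff := pi_mul_a_of_mod_four_eq_three (n := n₀) (by rw [n₀_eq]) i
  have hdegree : (n₀ * (n₀ + 1) / 4 - i : ℝ) = ((992738310 - i : ℤ) : ℝ) := by
    rw [cast_n₀]
    push_cast
    norm_num
  rw [hdegree, ← fullSineTransform] at hcoeff
  rw [abs_fullSineTransform_natAbs, ← abs_neg (fullSineTransform _ _), ← hcoeff, abs_mul,
    abs_of_pos pi_pos, Nat.cast_natAbs, Int.cast_abs]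

lemma natAbs_a_lt {i : ℕ} (hi : (992738310 - i : ℤ).natAbs ≠ 19911) :
    (a n₀ i).natAbs < (a n₀ 992718399).natAbs := by
  have hlt := abs_fullSineTransform_lt hi
  have hmax := pi_mul_natAbs_a 992718399
  norm_num only at hmax
  rw [← hmax, ← pi_mul_natAbs_a, mul_lt_mul_iff_right₀ pi_pos] at hlt
  exact_mod_cast hlt

lemma natAbs_a_le (i : ℕ) : (a n₀ i).natAbs ≤ (a n₀ 992718399).natAbs := by
  by_cases hi : (992738310 - i : ℤ).natAbs = 19911
  · have heq := pi_mul_natAbs_a i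
    rw [hi, show 19911 = (992738310 - (992718399 : ℕ) : ℤ).natAbs by norm_num,
      ← pi_mul_natAbs_a, mul_right_inj' pi_ne_zero] at heq
    exact_mod_cast heq.le
  · exact (natAbs_a_lt hi).le

lemma L_eq_of_forall_le_of_forall_lt {n j : ℕ} (hj : j ≤ n * (n + 1) / 2)
    (hle : ∀ i, (a n i).natAbs ≤ (a n j).natAbs)
    (hlt : ∀ i < j, (a n i).natAbs < (a n j).natAbs) : L n = j := by
  have hmax : M n = (a n j).natAbs :=
    le_antisymm (Finset.sup_le fun i _ => hle i)
      (le_sup (f := fun i => (a n i).natAbs) (mem_range.2 (Nat.lt_succ_of_le hj)))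
  rw [L, hmax]
  exact IsLeast.csInf_eq ⟨rfl, fun i hi => not_lt.1 fun hij => (hlt i hij).ne hi⟩

end LargestCoefficient

end QPochhammer

/-- `L(63015) = 63015·63016/4 - 124 - 19787`, where `63015 = 391 + 62624`. -/
theorem stmt_17 : L 63015 = 63015 * 63016 / 4 - 124 - 19787 := by
  rw [show 63015 * 63016 / 4 - 124 - 19787 = 992718399 by norm_num, ← QPochhammer.n₀_eq]
  exact QPochhammer.L_eq_of_forall_le_of_forall_lt (by rw [QPochhammer.n₀_eq]; norm_num)
    QPochhammer.natAbs_a_le fun i hi => QPochhammer.natAbs_a_lt (by lia)
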